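/- Let δ(x, y) = y, let X be the polynomial vector field X(x, y) = (y³ + x²y + x⁴, x³ + xy² + y⁴), and let X_Ω be its Newton-polygon principal part X_Ω(x, y) = (y³ + x²y, x³ + xy²). Then the constrained systems (X, δ) and (X_Ω, δ) are orientation-preserving C⁰-orbitally equivalent at (0, 0): the terms x⁴ in the first component and y⁴ in the second component, which lie strictly above the boundary of the Newton polygon, do not change the topological type of the phase portrait near the origin. -/

import Mathlib

/-- A phase curve of the vector field `X` in the set `V`: a differentiable curve
`c : J → V` on a nondegenerate interval `J` with `c'(t) = X(c(t))` for all `t ∈ J`. -/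
def IsPhaseCurve (X : ℝ × ℝ → ℝ × ℝ) (V : Set (ℝ × ℝ)) (J : Set ℝ) (c : ℝ → ℝ × ℝ) : Prop :=
  J.OrdConnected ∧ J.Nontrivial ∧ (∀ t ∈ J, c t ∈ V) ∧
    ∀ t ∈ J, HasDerivWithinAt c (X (c t)) J t

/-- The planar constrained systems `(X, δ)` and `(Y, γ)` are orientation-preserving
`C⁰`-orbitally equivalent at `(p₁, p₂)`: there are open neighborhoods `V₁ ∋ p₁`, `V₂ ∋ p₂`
and a homeomorphism `Φ : V₁ → V₂` sending `p₁` to `p₂` and impasse set to impasse set, which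
carries phase curves of `X` off the impasse set onto phase curves of `Y` off the impasse set
up to continuous strictly increasing reparametrizations, and conversely for `Φ⁻¹`. -/
def OrbitallyEquivAt (X : ℝ × ℝ → ℝ × ℝ) (δ : ℝ × ℝ → ℝ) (p₁ : ℝ × ℝ)
    (Y : ℝ × ℝ → ℝ × ℝ) (γ : ℝ × ℝ → ℝ) (p₂ : ℝ × ℝ) : Prop :=
  ∃ (V₁ V₂ : Set (ℝ × ℝ)) (Φ Φinv : ℝ × ℝ → ℝ × ℝ),
    IsOpen V₁ ∧ IsOpen V₂ ∧ p₁ ∈ V₁ ∧ p₂ ∈ V₂ ∧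
    -- Φ is a homeomorphism from V₁ onto V₂ with inverse Φinv
    ContinuousOn Φ V₁ ∧ ContinuousOn Φinv V₂ ∧
    Set.MapsTo Φ V₁ V₂ ∧ Set.MapsTo Φinv V₂ V₁ ∧
    (∀ z ∈ V₁, Φinv (Φ z) = z) ∧ (∀ z ∈ V₂, Φ (Φinv z) = z) ∧
    Φ p₁ = p₂ ∧
    -- Φ maps the impasse set to the impasse set
    Φ '' ({z | δ z = 0} ∩ V₁) = {z | γ z = 0} ∩ V₂ ∧
    -- Φ maps phase curves of X to phase curves of Y, preserving orientation
    (∀ (J : Set ℝ) (c : ℝ → ℝ × ℝ),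
      IsPhaseCurve X (V₁ \ {z | δ z = 0}) J c →
      ∃ (J' : Set ℝ) (d : ℝ → ℝ × ℝ) (τ : ℝ → ℝ),
        IsPhaseCurve Y (V₂ \ {z | γ z = 0}) J' d ∧
        ContinuousOn τ J ∧ StrictMonoOn τ J ∧ τ '' J = J' ∧
        ∀ t ∈ J, Φ (c t) = d (τ t)) ∧
    -- Φ⁻¹ maps phase curves of Y to phase curves of X, preserving orientation
    (∀ (J : Set ℝ) (d : ℝ → ℝ × ℝ),
      IsPhaseCurve Y (V₂ \ {z | γ z = 0}) J d →
      ∃ (J' : Set ℝ) (c : ℝ → ℝ × ℝ) (τ : ℝ → ℝ),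
        IsPhaseCurve X (V₁ \ {z | δ z = 0}) J' c ∧
        ContinuousOn τ J ∧ StrictMonoOn τ J ∧ τ '' J = J' ∧
        ∀ t ∈ J, Φinv (d t) = c (τ t))

namespace PPE

open Set Filter Topology Asymptotics

/-- `f` on `J` is, up to a strictly increasing continuous time change `τ`, a phase curve. -/
def Arc (X : ℝ × ℝ → ℝ × ℝ) (J : Set ℝ) (f : ℝ → ℝ × ℝ) : Prop :=
  ∃ τ : ℝ → ℝ, ContinuousOn τ J ∧ StrictMonoOn τ J ∧
    ∀ t ∈ J, (fun s => f s - f t - (τ s - τ t) • X (f t)) =o[𝓝[J] t] (fun s => τ s - τ t)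

lemma Arc.congr {X : ℝ × ℝ → ℝ × ℝ} {J : Set ℝ} {f g : ℝ → ℝ × ℝ} (h : Arc X J f)
    (hfg : ∀ t ∈ J, f t = g t) : Arc X J g := by
  obtain ⟨τ, h1, h2, h3⟩ := h
  refine ⟨τ, h1, h2, fun t ht => (h3 t ht).congr' ?_ EventuallyEq.rfl⟩
  filter_upwards [self_mem_nhdsWithin] with s hs
  rw [hfg s hs, hfg t ht]

lemma Arc.phase {X : ℝ × ℝ → ℝ × ℝ} {J : Set ℝ} {f : ℝ → ℝ × ℝ} {V : Set (ℝ × ℝ)}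
    (h : Arc X J f) (hJ : J.OrdConnected) (hJ' : J.Nontrivial) (hV : ∀ t ∈ J, f t ∈ V) :
    ∃ (J' : Set ℝ) (d : ℝ → ℝ × ℝ) (τ : ℝ → ℝ), IsPhaseCurve X V J' d ∧
        ContinuousOn τ J ∧ StrictMonoOn τ J ∧ τ '' J = J' ∧ ∀ t ∈ J, f t = d (τ t) := by
  obtain ⟨τ, h1, h2, h3⟩ := h
  set g := Function.invFunOn τ J with hg
  have hgl : ∀ t ∈ J, g (τ t) = t := fun t ht => h2.injOn.leftInvOn_invFunOn ht
  have hoc : (τ '' J).OrdConnected := by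
    have := hJ.isPreconnected.image τ h1
    exact this.ordConnected
  have hgc : ContinuousOn g (τ '' J) := by
    let e := h2.orderIso τ J
    have := hJ; have := hoc
    have hc : Continuous e.symm := e.symm.continuous
    rw [continuousOn_iff_continuous_domRestrict]
    have : (τ '' J).domRestrict g = fun y => ((e.symm y : J) : ℝ) := by
      funext y
      obtain ⟨x, rfl⟩ := e.surjective y
      rw [e.symm_apply_apply]
      exact hgl x x.2
    rw [this]
    exact continuous_subtype_val.comp hc
  refine ⟨τ '' J, f ∘ g, τ, ⟨hoc, hJ'.image_of_injOn h2.injOn, ?_, ?_⟩, h1, h2, rfl, ?_⟩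
  · rintro _ ⟨t, ht, rfl⟩
    simpa [hgl t ht] using hV t ht
  · rintro _ ⟨t, ht, rfl⟩
    rw [hasDerivWithinAt_iff_isLittleO]
    have hm : Tendsto g (𝓝[τ '' J] (τ t)) (𝓝[J] t) := by
      refine tendsto_nhdsWithin_iff.2 ⟨?_, ?_⟩
      · have := hgc (τ t) ⟨t, ht, rfl⟩
        unfold ContinuousWithinAt at this
        rwa [hgl t ht] at this
      · filter_upwards [self_mem_nhdsWithin] with y hy
        obtain ⟨x, hx, rfl⟩ := hy
        rwa [hgl x hx]
    have := (h3 t ht).comp_tendsto hm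
    refine this.congr' ?_ ?_
    · filter_upwards [self_mem_nhdsWithin] with y hy
      obtain ⟨x, hx, rfl⟩ := hy
      simp [hgl x hx, hgl t ht]
    · filter_upwards [self_mem_nhdsWithin] with y hy
      obtain ⟨x, hx, rfl⟩ := hy
      simp [hgl x hx]
  · intro t ht
    simp [hgl t ht]

lemma Arc.glue {X : ℝ × ℝ → ℝ × ℝ} {J : Set ℝ} {f : ℝ → ℝ × ℝ} {t₀ : ℝ} (ht₀ : t₀ ∈ J)
    (h1 : Arc X (J ∩ Iic t₀) f) (h2 : Arc X (J ∩ Ici t₀) f) : Arc X J f := by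
  obtain ⟨τ₁, a1, a2, a3⟩ := h1
  obtain ⟨τ₂, b1, b2, b3⟩ := h2
  set τ : ℝ → ℝ := fun s => if s ≤ t₀ then τ₁ s - τ₁ t₀ else τ₂ s - τ₂ t₀ with hτ
  have e1 : ∀ s ∈ J ∩ Iic t₀, τ s = τ₁ s - τ₁ t₀ := fun s hs => if_pos hs.2
  have e2 : ∀ s ∈ J ∩ Ici t₀, τ s = τ₂ s - τ₂ t₀ := by
    intro s hs
    by_cases h : s ≤ t₀
    · have : s = t₀ := le_antisymm h hs.2
      simp [hτ, this]
    · exact if_neg h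
  have m1 : t₀ ∈ J ∩ Iic t₀ := ⟨ht₀, self_mem_Iic⟩
  have m2 : t₀ ∈ J ∩ Ici t₀ := ⟨ht₀, self_mem_Ici⟩
  have hU : J = (J ∩ Iic t₀) ∪ (J ∩ Ici t₀) := by
    rw [← inter_union_distrib_left, Iic_union_Ici, inter_univ]
  have c1 : ContinuousOn τ (J ∩ Iic t₀) := (a1.sub continuousOn_const).congr e1
  have c2 : ContinuousOn τ (J ∩ Ici t₀) := (b1.sub continuousOn_const).congr e2
  have g1 : ∀ t ∈ J ∩ Iic t₀, (fun s => f s - f t - (τ s - τ t) • X (f t))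
      =o[𝓝[J ∩ Iic t₀] t] (fun s => τ s - τ t) := by
    intro t ht
    refine (a3 t ht).congr' ?_ ?_ <;>
    · filter_upwards [self_mem_nhdsWithin] with s hs
      rw [e1 s hs, e1 t ht]; simp
  have g2 : ∀ t ∈ J ∩ Ici t₀, (fun s => f s - f t - (τ s - τ t) • X (f t))
      =o[𝓝[J ∩ Ici t₀] t] (fun s => τ s - τ t) := by
    intro t ht
    refine (b3 t ht).congr' ?_ ?_ <;>
    · filter_upwards [self_mem_nhdsWithin] with s hs
      rw [e2 s hs, e2 t ht]; simp
  have k1 : ∀ t, t < t₀ → 𝓝[J] t = 𝓝[J ∩ Iic t₀] t := fun t ht =>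
    (nhdsWithin_inter_of_mem' (mem_nhdsWithin_of_mem_nhds (Iic_mem_nhds ht))).symm
  have k2 : ∀ t, t₀ < t → 𝓝[J] t = 𝓝[J ∩ Ici t₀] t := fun t ht =>
    (nhdsWithin_inter_of_mem' (mem_nhdsWithin_of_mem_nhds (Ici_mem_nhds ht))).symm
  have k3 : 𝓝[J] t₀ = 𝓝[J ∩ Iic t₀] t₀ ⊔ 𝓝[J ∩ Ici t₀] t₀ := by
    rw [← nhdsWithin_union, ← hU]
  refine ⟨τ, ?_, ?_, ?_⟩
  · intro t ht
    unfold ContinuousWithinAt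
    rcases lt_trichotomy t t₀ with h | h | h
    · rw [k1 t h]; exact c1 t ⟨ht, h.le⟩
    · subst h; rw [k3]; exact Filter.Tendsto.sup (c1 t m1) (c2 t m2)
    · rw [k2 t h]; exact c2 t ⟨ht, h.le⟩
  · intro s hs t ht hst
    rcases le_total t t₀ with h | h
    · rw [e1 s ⟨hs, hst.le.trans h⟩, e1 t ⟨ht, h⟩]
      have := a2 ⟨hs, hst.le.trans h⟩ ⟨ht, h⟩ hst
      linarith
    · rcases le_total s t₀ with h' | h'
      · rw [e1 s ⟨hs, h'⟩, e2 t ⟨ht, h⟩]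
        have A := a2.monotoneOn ⟨hs, h'⟩ m1 h'
        have B := b2.monotoneOn m2 ⟨ht, h⟩ h
        rcases h'.lt_or_eq with h'' | h''
        · have := a2 ⟨hs, h'⟩ m1 h''
          linarith
        · have := b2 m2 ⟨ht, h⟩ (h'' ▸ hst)
          linarith
      · rw [e2 s ⟨hs, h'⟩, e2 t ⟨ht, h⟩]
        have := b2 ⟨hs, h'⟩ ⟨ht, h⟩ hst
        linarith
  · intro t ht
    rcases lt_trichotomy t t₀ with h | h | h
    · rw [k1 t h]; exact g1 t ⟨ht, h.le⟩
    · subst h; rw [k3]; exact (g1 t m1).sup (g2 t m2)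
    · rw [k2 t h]; exact g2 t ⟨ht, h.le⟩

lemma Arc.of_comp {X : ℝ × ℝ → ℝ × ℝ} {J : Set ℝ} {β : ℝ → ℝ × ℝ} {m T κ : ℝ → ℝ}
    (hm : ContinuousOn m J) (hT : ∀ t ∈ J, HasDerivAt T (κ (m t)) (m t))
    (hκ : ∀ t ∈ J, κ (m t) ≠ 0) (hmono : StrictMonoOn (fun t => T (m t)) J)
    (hβ : ∀ t ∈ J, HasDerivAt β (κ (m t) • X (β (m t))) (m t)) :
    Arc X J (fun t => β (m t)) := by
  refine ⟨fun t => T (m t), ?_, hmono, ?_⟩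
  · intro t ht
    exact (hT t ht).continuousAt.comp_continuousWithinAt (hm t ht)
  · intro t ht
    have hb := hasDerivAt_iff_isLittleO.1 (hβ t ht)
    have ht' := hasDerivAt_iff_isLittleO.1 (hT t ht)
    have hO : (fun x => x - m t) =O[𝓝 (m t)] (fun x => T x - T (m t)) := by
      have h1 : (fun x => (κ (m t))⁻¹ * (T x - T (m t) - (x - m t) • κ (m t)))
          =o[𝓝 (m t)] (fun x => x - m t) := ht'.const_mul_left _
      have h2 := h1.right_isBigO_add
      refine h2.trans ?_
      have : (fun x => (κ (m t))⁻¹ * (T x - T (m t) - (x - m t) • κ (m t)) + (x - m t))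
          = fun x => (κ (m t))⁻¹ * (T x - T (m t)) := by
        funext x
        have := hκ t ht
        simp only [smul_eq_mul]
        field_simp
        ring
      rw [this]
      exact (isBigO_refl _ _).const_mul_left _
    have key : (fun x => β x - β (m t) - (T x - T (m t)) • X (β (m t)))
        =o[𝓝 (m t)] (fun x => T x - T (m t)) := by
      have h3 : (fun x => (T x - T (m t) - (x - m t) • κ (m t)) • X (β (m t)))
          =o[𝓝 (m t)] (fun x => x - m t) := by
        have := ht'.smul_isBigO (isBigO_refl (fun _ : ℝ => X (β (m t))) (𝓝 (m t)))
        refine this.trans_isBigO ?_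
        have h5 : (fun x => (x - m t) • X (β (m t))) =O[𝓝 (m t)] (fun x => (x - m t)) := by
          refine IsBigO.of_bound ‖X (β (m t))‖ (Eventually.of_forall fun x => ?_)
          rw [norm_smul, mul_comm]
        exact h5
      refine ((hb.sub h3).congr_left fun x => ?_).trans_isBigO hO
      simp only [smul_eq_mul]
      module
    exact key.comp_tendsto (hm t ht)

lemma gron {J : Set ℝ} (hJ : Convex ℝ J) {D D' : ℝ → ℝ} {K : ℝ}
    (hD : ∀ t ∈ J, HasDerivWithinAt D (D' t) J t) (hK : ∀ t ∈ J, |D' t| ≤ K * |D t|)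
    {s t : ℝ} (hs : s ∈ J) (ht : t ∈ J) : |D t| ≤ Real.exp (K * |t - s|) * |D s| := by
  have hc : ContinuousOn D J := fun t ht => (hD t ht).continuousWithinAt
  have aux : ∀ t ∈ J, |D t * D' t| ≤ K * D t ^ 2 := by
    intro t ht
    rw [abs_mul, ← sq_abs (D t)]
    nlinarith [hK t ht, abs_nonneg (D t)]
  have fin : ∀ {u v E : ℝ}, u ^ 2 ≤ E ^ 2 * v ^ 2 → 0 ≤ E → |u| ≤ E * |v| := by
    intro u v E h hE
    rw [← abs_of_nonneg hE, ← abs_mul]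
    apply sq_le_sq.1
    rwa [mul_pow]
  rcases le_total s t with hst | hst
  · have hm : AntitoneOn (fun t => D t ^ 2 * Real.exp (-(2 * K) * t)) J := by
      refine antitoneOn_of_hasDerivWithinAt_nonpos hJ
        (f' := fun t => (2 * (D t * D' t) - 2 * K * D t ^ 2) * Real.exp (-(2 * K) * t)) ?_ ?_ ?_
      · exact (hc.pow 2).mul (by fun_prop)
      · intro x hx
        have h1 := (((hD x (interior_subset hx)).mono interior_subset).pow 2).mul
          (((hasDerivAt_id x).const_mul (-(2 * K))).exp.hasDerivWithinAt (s := interior J))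
        refine h1.congr_deriv ?_
        simp
        ring
      · intro x hx
        have := (abs_le.1 (aux x (interior_subset hx))).2
        have h2 := Real.exp_pos (-(2 * K) * x)
        nlinarith
    have := hm hs ht hst
    simp only at this
    apply fin _ (Real.exp_pos _).le
    rw [abs_of_nonneg (sub_nonneg.2 hst), ← Real.exp_nat_mul]
    have e : Real.exp ((2:ℕ) * (K * (t - s))) = Real.exp (-(2 * K) * s) / Real.exp (-(2 * K) * t) := by
      rw [← Real.exp_sub]; congr 1; push_cast; ring
    rw [e, div_mul_eq_mul_div, le_div_iff₀ (Real.exp_pos _)]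
    linarith
  · have hm : MonotoneOn (fun t => D t ^ 2 * Real.exp ((2 * K) * t)) J := by
      refine monotoneOn_of_hasDerivWithinAt_nonneg hJ
        (f' := fun t => (2 * (D t * D' t) + 2 * K * D t ^ 2) * Real.exp ((2 * K) * t)) ?_ ?_ ?_
      · exact (hc.pow 2).mul (by fun_prop)
      · intro x hx
        have h1 := (((hD x (interior_subset hx)).mono interior_subset).pow 2).mul
          (((hasDerivAt_id x).const_mul ((2 * K))).exp.hasDerivWithinAt (s := interior J))
        refine h1.congr_deriv ?_
        simp
        ring
      · intro x hx
        have := (abs_le.1 (aux x (interior_subset hx))).1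
        have h2 := Real.exp_pos ((2 * K) * x)
        nlinarith
    have := hm ht hs hst
    simp only at this
    apply fin _ (Real.exp_pos _).le
    rw [abs_of_nonpos (sub_nonpos.2 hst), ← Real.exp_nat_mul]
    have e : Real.exp ((2:ℕ) * (K * -(t - s))) = Real.exp ((2 * K) * s) / Real.exp ((2 * K) * t) := by
      rw [← Real.exp_sub]; congr 1; push_cast; ring
    rw [e, div_mul_eq_mul_div, le_div_iff₀ (Real.exp_pos _)]
    linarith

/-- clamp to `[-1,1]` -/
noncomputable def cl (θ : ℝ) : ℝ := max (-1) (min 1 θ)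

lemma cl_mem (θ : ℝ) : -1 ≤ cl θ ∧ cl θ ≤ 1 :=
  ⟨le_max_left _ _, max_le (by norm_num) (min_le_left _ _)⟩

lemma cl_eq {θ : ℝ} (h : |θ| ≤ 1) : cl θ = θ := by
  have := abs_le.1 h
  unfold cl
  rw [min_eq_right this.2, max_eq_right this.1]

lemma cl_cont : Continuous cl := by unfold cl; fun_prop

lemma cl_lip (a b : ℝ) : |cl a - cl b| ≤ |a - b| := by
  unfold cl
  refine (abs_max_sub_max_le_max _ _ _ _).trans ?_
  simp only [sub_self, abs_zero]
  refine max_le (abs_nonneg _) ((abs_min_sub_min_le_max _ _ _ _).trans ?_)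
  simp

/-- denominator -/
noncomputable def Den (σ τ ξ θ : ℝ) : ℝ :=
  8 * (1 + θ ^ 2) + ξ * (σ * (1 + θ) ^ 4 + τ * (1 - θ) ^ 4)

/-- numerator -/
noncomputable def Num (σ τ θ : ℝ) : ℝ := σ * (1 + θ) ^ 5 - τ * (1 - θ) ^ 5

/-- right-hand side of the scalar ODE -/
noncomputable def R (σ τ ξ ζ : ℝ) : ℝ :=
  ξ ^ 2 * (Num σ τ (cl (ζ / ξ ^ 2)) / Den σ τ ξ (cl (ζ / ξ ^ 2)))

lemma pow_aux {u v : ℝ} (hu : 0 ≤ u) (hu2 : u ≤ 2) (hv : 0 ≤ v) (hv2 : v ≤ 2) (n : ℕ) :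
    |u ^ (n + 1) - v ^ (n + 1)| ≤ (n + 1) * 2 ^ n * |u - v| := by
  induction n with
  | zero => simp
  | succ n ih =>
    have e : u ^ (n + 1 + 1) - v ^ (n + 1 + 1) = u * (u ^ (n + 1) - v ^ (n + 1)) + (u - v) * v ^ (n + 1) := by
      ring
    rw [e]
    refine (abs_add_le _ _).trans ?_
    rw [abs_mul, abs_mul, abs_of_nonneg hu, abs_of_nonneg (pow_nonneg hv _)]
    have h1 : v ^ (n + 1) ≤ 2 ^ (n + 1) := pow_le_pow_left₀ hv hv2 _
    have h2 : u * |u ^ (n + 1) - v ^ (n + 1)| ≤ 2 * ((n + 1) * 2 ^ n * |u - v|) :=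
      mul_le_mul hu2 ih (abs_nonneg _) (by norm_num)
    have h3 := mul_le_mul_of_nonneg_left h1 (abs_nonneg (u - v))
    push_cast
    calc _ ≤ 2 * ((n + 1) * 2 ^ n * |u - v|) + |u - v| * 2 ^ (n + 1) := add_le_add h2 h3
      _ = _ := by ring

lemma comb {σ τ a b A B : ℝ} (hσ : |σ| ≤ 1) (hτ : |τ| ≤ 1) (ha : |a| ≤ A) (hb : |b| ≤ B) :
    |σ * a + τ * b| ≤ A + B := by
  refine (abs_add_le _ _).trans ?_
  rw [abs_mul, abs_mul]
  have := mul_le_mul hσ ha (abs_nonneg _) (by norm_num)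
  have := mul_le_mul hτ hb (abs_nonneg _) (by norm_num)
  linarith

section

lemma pow_bd {u : ℝ} (hu : 0 ≤ u) (hu2 : u ≤ 2) (n : ℕ) : |u ^ n| ≤ 2 ^ n := by
  rw [abs_of_nonneg (pow_nonneg hu _)]
  exact pow_le_pow_left₀ hu hu2 _


lemma Den_lb {σ τ : ℝ} (hσ : |σ| ≤ 1) (hτ : |τ| ≤ 1)
    {ξ θ : ℝ} (h0 : 0 ≤ ξ) (h1 : ξ ≤ 1 / 10) (hθ : -1 ≤ θ ∧ θ ≤ 1) :
    24 / 5 ≤ Den σ τ ξ θ := by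
  have h := comb hσ hτ (pow_bd (u := 1 + θ) (by linarith) (by linarith) 4)
    (pow_bd (u := 1 - θ) (by linarith) (by linarith) 4)
  have := (abs_le.1 h).1
  unfold Den
  nlinarith [sq_nonneg θ]

lemma Num_ub {σ τ : ℝ} (hσ : |σ| ≤ 1) (hτ : |τ| ≤ 1)
    {θ : ℝ} (hθ : -1 ≤ θ ∧ θ ≤ 1) : |Num σ τ θ| ≤ 64 := by
  have h := comb hσ (τ := -τ) (by rwa [abs_neg]) (pow_bd (u := 1 + θ) (by linarith) (by linarith) 5)
    (pow_bd (u := 1 - θ) (by linarith) (by linarith) 5)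
  unfold Num
  calc _ = |σ * (1 + θ) ^ 5 + -τ * (1 - θ) ^ 5| := by ring_nf
    _ ≤ _ := h
    _ = _ := by norm_num

lemma M_ub {σ τ : ℝ} (hσ : |σ| ≤ 1) (hτ : |τ| ≤ 1)
    {ξ θ : ℝ} (h0 : 0 ≤ ξ) (h1 : ξ ≤ 1 / 10) (hθ : -1 ≤ θ ∧ θ ≤ 1) :
    |Num σ τ θ / Den σ τ ξ θ| ≤ 14 := by
  have hd := Den_lb hσ hτ h0 h1 hθ
  have hn := Num_ub hσ hτ hθ
  rw [abs_div, abs_of_pos (by linarith : 0 < Den σ τ ξ θ), div_le_iff₀ (by linarith)]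
  linarith

lemma M_lip {σ τ : ℝ} (hσ : |σ| ≤ 1) (hτ : |τ| ≤ 1)
    {ξ a b : ℝ} (h0 : 0 ≤ ξ) (h1 : ξ ≤ 1 / 10) (ha : -1 ≤ a ∧ a ≤ 1)
    (hb : -1 ≤ b ∧ b ≤ 1) :
    |Num σ τ a / Den σ τ ξ a - Num σ τ b / Den σ τ ξ b| ≤ 100 * |a - b| := by
  have hda := Den_lb hσ hτ h0 h1 ha
  have hdb := Den_lb hσ hτ h0 h1 hb
  have hm := M_ub hσ hτ h0 h1 hb
  have p := fun n => pow_aux (u := 1 + a) (v := 1 + b) (by linarith) (by linarith) (by linarith)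
    (by linarith) n
  have q := fun n => pow_aux (u := 1 - a) (v := 1 - b) (by linarith) (by linarith) (by linarith)
    (by linarith) n
  have e1 : 1 + a - (1 + b) = a - b := by ring
  have e2 : |1 - a - (1 - b)| = |a - b| := by
    rw [← abs_neg]; congr 1; ring
  simp only [e1, e2] at p q
  have hN : |Num σ τ a - Num σ τ b| ≤ 160 * |a - b| := by
    have h := comb hσ (τ := -τ) (by rwa [abs_neg]) (p 4) (q 4)
    norm_num at h
    calc _ = |σ * ((1 + a) ^ 5 - (1 + b) ^ 5) + -(τ * ((1 - a) ^ 5 - (1 - b) ^ 5))| := by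
          unfold Num; ring_nf
      _ ≤ _ := h
      _ = _ := by ring
  have hD : |Den σ τ ξ b - Den σ τ ξ a| ≤ 112 / 5 * |a - b| := by
    have h := comb hσ hτ (p 3) (q 3)
    norm_num at h
    have h5 : |ξ * (σ * ((1 + a) ^ 4 - (1 + b) ^ 4) + τ * ((1 - a) ^ 4 - (1 - b) ^ 4))|
        ≤ 1 / 10 * (32 * |a - b| + 32 * |a - b|) := by
      rw [abs_mul, abs_of_nonneg h0]
      exact mul_le_mul h1 h (abs_nonneg _) (by norm_num)
    have h6 : |8 * (a - b) * (a + b)| ≤ 16 * |a - b| := by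
      rw [abs_mul, abs_mul]
      have : |a + b| ≤ 2 := abs_le.2 ⟨by linarith, by linarith⟩
      norm_num
      nlinarith [abs_nonneg (a - b)]
    rw [abs_sub_comm]
    calc _ = |8 * (a - b) * (a + b) + ξ * (σ * ((1 + a) ^ 4 - (1 + b) ^ 4) + τ * ((1 - a) ^ 4 - (1 - b) ^ 4))| := by
          unfold Den; ring_nf
      _ ≤ _ := abs_add_le _ _
      _ ≤ _ := add_le_add h6 h5
      _ = _ := by ring
  have e : Num σ τ a / Den σ τ ξ a - Num σ τ b / Den σ τ ξ b =
      ((Num σ τ a - Num σ τ b) + Num σ τ b / Den σ τ ξ b * (Den σ τ ξ b - Den σ τ ξ a)) / Den σ τ ξ a := by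
    have : Den σ τ ξ a ≠ 0 := by linarith
    have : Den σ τ ξ b ≠ 0 := by linarith
    field_simp
    ring
  rw [e, abs_div, abs_of_pos (by linarith : 0 < Den σ τ ξ a), div_le_iff₀ (by linarith)]
  refine (abs_add_le _ _).trans ?_
  rw [abs_mul]
  have h7 := mul_le_mul hm hD (abs_nonneg _) (by norm_num)
  have h8 := mul_le_mul_of_nonneg_left hda (abs_nonneg (a - b))
  nlinarith [abs_nonneg (a - b)]

lemma R_ub {σ τ : ℝ} (hσ : |σ| ≤ 1) (hτ : |τ| ≤ 1)
    {ξ : ℝ} (ζ : ℝ) (h0 : 0 ≤ ξ) (h1 : ξ ≤ 1 / 10) : |R σ τ ξ ζ| ≤ 14 * ξ ^ 2 := by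
  unfold R
  rw [abs_mul, abs_of_nonneg (sq_nonneg ξ)]
  have := M_ub hσ hτ h0 h1 (cl_mem (ζ / ξ ^ 2))
  nlinarith [sq_nonneg ξ]

lemma R_lip {σ τ : ℝ} (hσ : |σ| ≤ 1) (hτ : |τ| ≤ 1)
    {ξ : ℝ} (a b : ℝ) (h0 : 0 ≤ ξ) (h1 : ξ ≤ 1 / 10) :
    |R σ τ ξ a - R σ τ ξ b| ≤ 100 * |a - b| := by
  unfold R
  rcases h0.eq_or_lt with rfl | hp
  · simp
  rw [← mul_sub, abs_mul, abs_of_nonneg (sq_nonneg ξ)]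
  have h2 := M_lip hσ hτ h0 h1 (cl_mem (a / ξ ^ 2)) (cl_mem (b / ξ ^ 2))
  have h3 := cl_lip (a / ξ ^ 2) (b / ξ ^ 2)
  rw [← sub_div, abs_div, abs_of_nonneg (sq_nonneg ξ)] at h3
  have h4 : ξ ^ 2 * (|a - b| / ξ ^ 2) = |a - b| := by field_simp
  have := mul_le_mul_of_nonneg_left (h2.trans (mul_le_mul_of_nonneg_left h3 (by norm_num))) (sq_nonneg ξ)
  nlinarith

lemma R_cont {σ τ : ℝ} (hσ : |σ| ≤ 1) (hτ : |τ| ≤ 1)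
    (ζ : ℝ) : ContinuousOn (fun ξ => R σ τ ξ ζ) (Icc 0 (1 / 10)) := by
  intro x hx
  rcases hx.1.eq_or_lt with rfl | hp
  · have hz : R σ τ 0 ζ = 0 := by simp [R]
    unfold ContinuousWithinAt
    simp only [hz]
    refine squeeze_zero_norm' (a := fun ξ => 14 * ξ ^ 2) ?_ ?_
    · filter_upwards [self_mem_nhdsWithin] with y hy
      exact R_ub hσ hτ ζ hy.1 hy.2
    · have : Tendsto (fun ξ : ℝ => 14 * ξ ^ 2) (𝓝 0) (𝓝 (14 * 0 ^ 2)) :=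
        (by fun_prop : Continuous fun ξ : ℝ => 14 * ξ ^ 2).tendsto 0
      simp only [ne_eq, OfNat.ofNat_ne_zero, not_false_eq_true, zero_pow, mul_zero] at this
      exact this.mono_left nhdsWithin_le_nhds
  · apply ContinuousAt.continuousWithinAt
    have hd := Den_lb hσ hτ hx.1 hx.2 (cl_mem (ζ / x ^ 2))
    have h1 : ContinuousAt (fun ξ : ℝ => cl (ζ / ξ ^ 2)) x :=
      cl_cont.continuousAt.comp (continuousAt_const.div (by fun_prop) (by positivity))
    unfold R
    refine ContinuousAt.mul (by fun_prop) (ContinuousAt.div ?_ ?_ (by linarith))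
    · unfold Num; fun_prop
    · unfold Den; fun_prop

/-- solutions of the scalar ODE -/
lemma exists_sol {σ τ : ℝ} (hσ : |σ| ≤ 1) (hτ : |τ| ≤ 1)
    {ξ₀ : ℝ} (h : ℝ) (h0 : 0 ≤ ξ₀) (h1 : ξ₀ ≤ 1 / 10) :
    ∃ Z : ℝ → ℝ, Z ξ₀ = h ∧ ∀ ξ ∈ Icc (0:ℝ) (1 / 10),
      HasDerivWithinAt Z (R σ τ ξ (Z ξ)) (Icc 0 (1 / 10)) ξ := by
  have : IsPicardLindelof (R σ τ) (tmin := 0) (tmax := 1 / 10) ⟨ξ₀, h0, h1⟩ h 1 0 1 100 := by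
    refine ⟨?_, ?_, ?_, ?_⟩
    · intro t ht
      refine (LipschitzWith.of_dist_le_mul ?_).lipschitzOnWith
      intro a b
      exact R_lip hσ hτ a b ht.1 ht.2
    · intro x _
      exact R_cont hσ hτ x
    · intro t ht x _
      refine (R_ub hσ hτ x ht.1 ht.2).trans ?_
      have := ht.1; have := ht.2
      simp only [NNReal.coe_one]
      nlinarith
    · simp
      constructor <;> linarith
  exact this.exists_eq_forall_mem_Icc_hasDerivWithinAt₀


/-- `Z` solves the scalar ODE on `[0,1/10]` -/
def Sol (σ τ : ℝ) (Z : ℝ → ℝ) : Prop :=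
  ∀ ξ ∈ Icc (0:ℝ) (1 / 10), HasDerivWithinAt Z (R σ τ ξ (Z ξ)) (Icc 0 (1 / 10)) ξ


lemma Sol.dist_le {σ τ : ℝ} (hσ : |σ| ≤ 1) (hτ : |τ| ≤ 1)
    {Z W : ℝ → ℝ} (hZ : Sol σ τ Z) (hW : Sol σ τ W) {s t : ℝ}
    (hs : s ∈ Icc (0:ℝ) (1 / 10)) (ht : t ∈ Icc (0:ℝ) (1 / 10)) :
    |Z t - W t| ≤ Real.exp 100 * |Z s - W s| := by
  have h := gron (convex_Icc (0:ℝ) (1 / 10)) (D := fun t => Z t - W t) (K := 100)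
    (fun t ht => (hZ t ht).sub (hW t ht)) (fun t ht => R_lip hσ hτ _ _ ht.1 ht.2) hs ht
  refine h.trans ?_
  gcongr
  have : |t - s| ≤ 1 := abs_le.2 ⟨by linarith [hs.2, ht.1], by linarith [ht.2, hs.1]⟩
  linarith

lemma Sol.eq {σ τ : ℝ} (hσ : |σ| ≤ 1) (hτ : |τ| ≤ 1)
    {Z W : ℝ → ℝ} (hZ : Sol σ τ Z) (hW : Sol σ τ W) {s t : ℝ}
    (hs : s ∈ Icc (0:ℝ) (1 / 10)) (ht : t ∈ Icc (0:ℝ) (1 / 10)) (h : Z s = W s) : Z t = W t := by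
  have := hZ.dist_le hσ hτ hW hs ht
  rw [h, sub_self, abs_zero, mul_zero] at this
  exact sub_eq_zero.1 (abs_nonpos_iff.1 this)

lemma Sol.lip {σ τ : ℝ} (hσ : |σ| ≤ 1) (hτ : |τ| ≤ 1)
    {Z : ℝ → ℝ} (hZ : Sol σ τ Z) {s t : ℝ}
    (hs : s ∈ Icc (0:ℝ) (1 / 10)) (ht : t ∈ Icc (0:ℝ) (1 / 10)) : |Z t - Z s| ≤ |t - s| := by
  have := (convex_Icc (0:ℝ) (1 / 10)).norm_image_sub_le_of_norm_hasDerivWithin_le (C := 1) hZ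
    (fun x hx => by
      refine (R_ub hσ hτ (Z x) hx.1 hx.2).trans ?_
      have := hx.1; have := hx.2
      nlinarith) hs ht
  simpa using this

lemma Sol.cone {σ τ : ℝ} (hσ : |σ| ≤ 1) (hτ : |τ| ≤ 1)
    {Z : ℝ → ℝ} (hZ : Sol σ τ Z) {s t : ℝ} (hs : s ∈ Icc (0:ℝ) (1 / 10))
    (ht : t ∈ Icc (0:ℝ) (1 / 10)) (hst : s < t) (h : |Z s| ≤ s ^ 2) : |Z t| < t ^ 2 := by
  have hc : ContinuousOn Z (Icc 0 (1 / 10)) := fun t ht => (hZ t ht).continuousWithinAt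
  have m1 : StrictMonoOn (fun ξ => ξ ^ 2 - Z ξ) (Icc 0 (1 / 10)) := by
    refine strictMonoOn_of_hasDerivWithinAt_pos (convex_Icc _ _)
      (f' := fun ξ => 2 * ξ - R σ τ ξ (Z ξ)) (by fun_prop) ?_ ?_
    · intro x hx
      have := ((hasDerivAt_pow 2 x).hasDerivWithinAt (s := Icc 0 (1 / 10))).sub (hZ x (interior_subset hx))
      refine (this.mono interior_subset).congr_deriv ?_
      simp
    · intro x hx
      rw [interior_Icc] at hx
      have := (abs_le.1 (R_ub hσ hτ (Z x) hx.1.le hx.2.le)).2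
      have := hx.1; have := hx.2
      nlinarith
  have m2 : StrictMonoOn (fun ξ => ξ ^ 2 + Z ξ) (Icc 0 (1 / 10)) := by
    refine strictMonoOn_of_hasDerivWithinAt_pos (convex_Icc _ _)
      (f' := fun ξ => 2 * ξ + R σ τ ξ (Z ξ)) (by fun_prop) ?_ ?_
    · intro x hx
      have := ((hasDerivAt_pow 2 x).hasDerivWithinAt (s := Icc 0 (1 / 10))).add (hZ x (interior_subset hx))
      refine (this.mono interior_subset).congr_deriv ?_
      simp
    · intro x hx
      rw [interior_Icc] at hx
      have := (abs_le.1 (R_ub hσ hτ (Z x) hx.1.le hx.2.le)).1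
      have := hx.1; have := hx.2
      nlinarith
  have a := m1 hs ht hst
  have b := m2 hs ht hst
  simp only at a b
  have := abs_le.1 h
  exact abs_lt.2 ⟨by linarith, by linarith⟩

end

/-- the solution issued from the boundary point of the cone with label `h` -/
noncomputable def Zf (σ τ h : ℝ) : ℝ → ℝ :=
  Classical.epsilon (fun Z => Z (√|h|) = h ∧ Sol σ τ Z)

lemma sqrt_mem {h : ℝ} (hh : |h| ≤ 1 / 100) : √|h| ∈ Icc (0:ℝ) (1 / 10) := by
  refine ⟨Real.sqrt_nonneg _, Real.sqrt_le_iff.2 ⟨by norm_num, by norm_num; linarith⟩⟩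

section

lemma Zf_spec {σ τ : ℝ} (hσ : |σ| ≤ 1) (hτ : |τ| ≤ 1)
    {h : ℝ} (hh : |h| ≤ 1 / 100) : Zf σ τ h (√|h|) = h ∧ Sol σ τ (Zf σ τ h) :=
  Classical.epsilon_spec (p := fun Z => Z (√|h|) = h ∧ Sol σ τ Z)
    (exists_sol hσ hτ h (sqrt_mem hh).1 (sqrt_mem hh).2)

lemma label_small {h ξ : ℝ} (hξ : ξ ∈ Icc (0:ℝ) (1 / 10)) (hh : |h| ≤ ξ ^ 2) : |h| ≤ 1 / 100 := by
  have := hξ.1; have := hξ.2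
  nlinarith

lemma Zf_bdry {σ τ : ℝ} (hσ : |σ| ≤ 1) (hτ : |τ| ≤ 1)
    {h ξ : ℝ} (hξ : ξ ∈ Icc (0:ℝ) (1 / 10)) (hh : |h| = ξ ^ 2) : Zf σ τ h ξ = h := by
  have := (Zf_spec hσ hτ (label_small hξ hh.le)).1
  rwa [hh, Real.sqrt_sq hξ.1] at this

lemma Zf_cone' {σ τ : ℝ} (hσ : |σ| ≤ 1) (hτ : |τ| ≤ 1)
    {h ξ : ℝ} (hξ : ξ ∈ Icc (0:ℝ) (1 / 10)) (hh : |h| < ξ ^ 2) :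
    |Zf σ τ h ξ| < ξ ^ 2 := by
  have hs := label_small hξ hh.le
  have h1 := Zf_spec hσ hτ hs
  refine h1.2.cone hσ hτ (sqrt_mem hs) hξ ?_ ?_
  · rw [Real.sqrt_lt' (lt_of_le_of_ne hξ.1 ?_)]
    · exact hh
    · rintro rfl
      simp at hh
      exact absurd hh (not_lt.2 (abs_nonneg h))
  · rw [h1.1, Real.sq_sqrt (abs_nonneg _)]

lemma Zf_cone {σ τ : ℝ} (hσ : |σ| ≤ 1) (hτ : |τ| ≤ 1)
    {h ξ : ℝ} (hξ : ξ ∈ Icc (0:ℝ) (1 / 10)) (hh : |h| ≤ ξ ^ 2) :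
    |Zf σ τ h ξ| ≤ ξ ^ 2 := by
  rcases hh.lt_or_eq with h1 | h1
  · exact (Zf_cone' hσ hτ hξ h1).le
  · rw [Zf_bdry hσ hτ hξ h1, h1]

lemma Zf_bdry_iff {σ τ : ℝ} (hσ : |σ| ≤ 1) (hτ : |τ| ≤ 1)
    {h ξ ζ : ℝ} (hξ : ξ ∈ Icc (0:ℝ) (1 / 10)) (hh : |h| ≤ ξ ^ 2)
    (hζ : |ζ| = ξ ^ 2) (hz : Zf σ τ h ξ = ζ) : h = ζ := by
  rcases hh.lt_or_eq with h1 | h1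
  · have := Zf_cone' hσ hτ hξ h1
    rw [hz, hζ] at this
    exact absurd this (lt_irrefl _)
  · rw [Zf_bdry hσ hτ hξ h1] at hz
    exact hz

/-- if a solution through the boundary with label `h` is in the cone at `ξ`, then `|h| ≤ ξ²` -/
lemma label_le {σ τ : ℝ} (hσ : |σ| ≤ 1) (hτ : |τ| ≤ 1)
    {h ξ : ℝ} (hξ : ξ ∈ Icc (0:ℝ) (1 / 10)) (hh : |h| ≤ 1 / 100)
    (hz : |Zf σ τ h ξ| ≤ ξ ^ 2) : |h| ≤ ξ ^ 2 := by
  by_contra hlt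
  rw [not_le] at hlt
  have hs := Zf_spec hσ hτ hh
  have := hs.2.cone hσ hτ hξ (sqrt_mem hh) ((Real.lt_sqrt hξ.1).2 hlt) hz
  rw [hs.1, Real.sq_sqrt (abs_nonneg _)] at this
  exact lt_irrefl _ this

lemma Zf_inj {σ τ : ℝ} (hσ : |σ| ≤ 1) (hτ : |τ| ≤ 1)
    {h h' ξ : ℝ} (hξ : ξ ∈ Icc (0:ℝ) (1 / 10)) (hh : |h| ≤ 1 / 100)
    (hh' : |h'| ≤ 1 / 100) (he : Zf σ τ h ξ = Zf σ τ h' ξ) : h = h' := by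
  wlog hle : |h'| ≤ |h| generalizing h h'
  · exact (this hh' hh he.symm (le_of_not_ge hle)).symm
  have a := Zf_spec hσ hτ hh
  have b := Zf_spec hσ hτ hh'
  have := a.2.eq hσ hτ b.2 hξ (sqrt_mem hh) he
  rw [a.1] at this
  refine (Zf_bdry_iff hσ hτ (sqrt_mem hh) ?_ ?_ this.symm).symm
  · rwa [Real.sq_sqrt (abs_nonneg _)]
  · rw [Real.sq_sqrt (abs_nonneg _)]

lemma Zf_dist {σ τ : ℝ} (hσ : |σ| ≤ 1) (hτ : |τ| ≤ 1)
    {h h' ξ ξ' : ℝ} (hξ : ξ ∈ Icc (0:ℝ) (1 / 10)) (hξ' : ξ' ∈ Icc (0:ℝ) (1 / 10))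
    (hh : |h| ≤ 1 / 100) (hh' : |h'| ≤ 1 / 100) :
    |Zf σ τ h' ξ' - Zf σ τ h ξ| ≤ Real.exp 100 * (|h - h'| + |(√|h|) - (√|h'|)|) + |ξ' - ξ| := by
  have a := Zf_spec hσ hτ hh
  have b := Zf_spec hσ hτ hh'
  have h1 := b.2.lip hσ hτ hξ hξ'
  have h2 := a.2.dist_le hσ hτ b.2 (sqrt_mem hh) hξ
  have h3 := b.2.lip hσ hτ (sqrt_mem hh') (sqrt_mem hh)
  rw [a.1] at h2
  rw [b.1] at h3
  have h4 : |h - Zf σ τ h' (√|h|)| ≤ |h - h'| + |(√|h|) - (√|h'|)| := by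
    calc _ = |(h - h') - (Zf σ τ h' (√|h|) - h')| := by ring_nf
      _ ≤ _ := abs_sub _ _
      _ ≤ _ := by linarith
  have h5 := h2.trans (mul_le_mul_of_nonneg_left h4 (Real.exp_pos 100).le)
  calc _ = |(Zf σ τ h' ξ' - Zf σ τ h' ξ) - (Zf σ τ h ξ - Zf σ τ h' ξ)| := by ring_nf
    _ ≤ _ := abs_sub _ _
    _ ≤ _ := by linarith

lemma Zf_cont {σ τ : ℝ} (hσ : |σ| ≤ 1) (hτ : |τ| ≤ 1)
    : ContinuousOn (fun p : ℝ × ℝ => Zf σ τ p.2 p.1)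
    {p | p.1 ∈ Icc (0:ℝ) (1 / 10) ∧ |p.2| ≤ 1 / 100} := by
  intro p hp
  unfold ContinuousWithinAt
  rw [tendsto_iff_dist_tendsto_zero]
  refine squeeze_zero' (g := fun q : ℝ × ℝ => Real.exp 100 * (|p.2 - q.2| + |(√|p.2|) - (√|q.2|)|) + |q.1 - p.1|)
    (Eventually.of_forall fun _ => dist_nonneg) ?_ ?_
  · filter_upwards [self_mem_nhdsWithin] with q hq
    exact Zf_dist hσ hτ hp.1 hq.1 hp.2 hq.2
  · have : Continuous (fun q : ℝ × ℝ => Real.exp 100 * (|p.2 - q.2| + |(√|p.2|) - (√|q.2|)|) + |q.1 - p.1|) := by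
      fun_prop
    have h := this.tendsto p
    simp only [sub_self, abs_zero, add_zero, mul_zero] at h
    exact h.mono_left nhdsWithin_le_nhds

lemma Zf_surj {σ τ : ℝ} (hσ : |σ| ≤ 1) (hτ : |τ| ≤ 1)
    {ξ ζ : ℝ} (hξ : ξ ∈ Icc (0:ℝ) (1 / 10)) (hζ : |ζ| ≤ ξ ^ 2) :
    ∃ h, |h| ≤ ξ ^ 2 ∧ Zf σ τ h ξ = ζ := by
  have hc : ContinuousOn (fun h => Zf σ τ h ξ) (Icc (-ξ ^ 2) (ξ ^ 2)) := by
    refine (Zf_cont hσ hτ).comp (f := fun h => (ξ, h)) (by fun_prop) ?_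
    intro h hh
    exact ⟨hξ, label_small hξ (abs_le.2 ⟨hh.1, hh.2⟩)⟩
  have := intermediate_value_Icc (by nlinarith [sq_nonneg ξ]) hc
  rw [Zf_bdry hσ hτ hξ (by rw [abs_neg, abs_of_nonneg (sq_nonneg ξ)]),
    Zf_bdry hσ hτ hξ (abs_of_nonneg (sq_nonneg ξ))] at this
  obtain ⟨h, hh, he⟩ := this (abs_le.1 hζ)
  exact ⟨h, abs_le.2 hh, he⟩

end

lemma Zf_zero {h ξ : ℝ} (hξ : ξ ∈ Icc (0:ℝ) (1 / 10)) (hh : |h| ≤ 1 / 100) : Zf 0 0 h ξ = h := by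
  have h0 : |(0:ℝ)| ≤ 1 := by simp
  have a := Zf_spec h0 h0 hh
  have b : Sol 0 0 (fun _ => h) := by
    intro x _
    simpa [R, Num] using hasDerivWithinAt_const x (Icc (0:ℝ) (10⁻¹)) h
  exact a.2.eq h0 h0 b (sqrt_mem hh) hξ a.1

/-- the point of the quadrant `(s₁,s₂)` with coordinates `ξ = |x|+|y|`, `ζ = x²-y²` -/
noncomputable def pt (s₁ s₂ ξ ζ : ℝ) : ℝ × ℝ := (s₁ * ((ξ + ζ / ξ) / 2), s₂ * ((ξ - ζ / ξ) / 2))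

/-- closed diamond -/
def Dm : Set (ℝ × ℝ) := {p | |p.1| + |p.2| ≤ 1 / 10}

/-- a sign -/
noncomputable def sg (x : ℝ) : ℝ := if 0 ≤ x then 1 else -1

/-- the map on a quadrant -/
noncomputable def Psq (s₁ s₂ : ℝ) (p : ℝ × ℝ) : ℝ × ℝ :=
  pt s₁ s₂ (|p.1| + |p.2|) (Zf s₂ s₁ (p.1 ^ 2 - p.2 ^ 2) (|p.1| + |p.2|))

/-- the homeomorphism -/
noncomputable def Ps (p : ℝ × ℝ) : ℝ × ℝ := Psq (sg p.1) (sg p.2) p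

lemma sg_cases (x : ℝ) : sg x = 1 ∨ sg x = -1 := by
  unfold sg; split_ifs <;> simp

lemma abs_sign {s : ℝ} (h : s = 1 ∨ s = -1) : |s| ≤ 1 := by
  rcases h with rfl | rfl <;> simp

lemma abs_sign' {s : ℝ} (h : s = 1 ∨ s = -1) : |s| = 1 := by
  rcases h with rfl | rfl <;> simp

lemma sg_mul (x : ℝ) : sg x * x = |x| := by
  unfold sg; split_ifs with h
  · rw [abs_of_nonneg h, one_mul]
  · rw [abs_of_neg (not_le.1 h)]; ring

lemma sg_eq {s x : ℝ} (hs : s = 1 ∨ s = -1) (h : 0 ≤ s * x) (hx : x ≠ 0) : sg x = s := by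
  unfold sg
  rcases hs with rfl | rfl
  · rw [if_pos (by linarith)]
  · rw [if_neg]
    rw [not_le]
    exact lt_of_le_of_ne (by linarith) hx

lemma label_bd (x y : ℝ) : |x ^ 2 - y ^ 2| ≤ (|x| + |y|) ^ 2 := by
  rw [← sq_abs x, ← sq_abs y]
  have := abs_nonneg x; have := abs_nonneg y
  exact abs_le.2 ⟨by nlinarith, by nlinarith⟩

lemma xi_mem {p : ℝ × ℝ} (hp : p ∈ Dm) : |p.1| + |p.2| ∈ Icc (0:ℝ) (1 / 10) :=
  ⟨by positivity, hp⟩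

lemma pt_plus (s₁ s₂ ξ : ℝ) : pt s₁ s₂ ξ (ξ ^ 2) = (s₁ * ξ, 0) := by
  unfold pt
  have : ξ ^ 2 / ξ = ξ := by rw [sq, mul_self_div_self]
  rw [this]; simp

lemma pt_minus (s₁ s₂ ξ : ℝ) : pt s₁ s₂ ξ (-ξ ^ 2) = (0, s₂ * ξ) := by
  unfold pt
  have : -ξ ^ 2 / ξ = -ξ := by rw [neg_div, sq, mul_self_div_self]
  rw [this]; simp

lemma Ps_axis1 {s₁ s₂ : ℝ} (h1 : s₁ = 1 ∨ s₁ = -1) (h2 : s₂ = 1 ∨ s₂ = -1) {x : ℝ}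
    (hp : (x, (0:ℝ)) ∈ Dm) : Psq s₁ s₂ (x, 0) = (s₁ * |x|, 0) := by
  have := xi_mem hp
  simp only [abs_zero, add_zero] at this
  unfold Psq
  simp only [abs_zero, add_zero]
  rw [Zf_bdry (abs_sign h2) (abs_sign h1) this (by simp)]
  have e : x ^ 2 - 0 ^ 2 = |x| ^ 2 := by simp
  rw [e, pt_plus]

lemma Ps_axis2 {s₁ s₂ : ℝ} (h1 : s₁ = 1 ∨ s₁ = -1) (h2 : s₂ = 1 ∨ s₂ = -1) {y : ℝ}
    (hp : ((0:ℝ), y) ∈ Dm) : Psq s₁ s₂ (0, y) = (0, s₂ * |y|) := by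
  have := xi_mem hp
  simp only [abs_zero, zero_add] at this
  unfold Psq
  simp only [abs_zero, zero_add]
  rw [Zf_bdry (abs_sign h2) (abs_sign h1) this (by simp)]
  have e : (0:ℝ) ^ 2 - y ^ 2 = -|y| ^ 2 := by simp
  rw [e, pt_minus]

lemma Ps_eq {s₁ s₂ : ℝ} (h1 : s₁ = 1 ∨ s₁ = -1) (h2 : s₂ = 1 ∨ s₂ = -1) {p : ℝ × ℝ}
    (hp : p ∈ Dm) (hx : 0 ≤ s₁ * p.1) (hy : 0 ≤ s₂ * p.2) : Ps p = Psq s₁ s₂ p := by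
  obtain ⟨x, y⟩ := p
  simp only at hx hy
  unfold Ps
  simp only
  by_cases hx0 : x = 0
  · subst hx0
    rw [Ps_axis2 (sg_cases _) (sg_cases _) hp, Ps_axis2 h1 h2 hp]
    by_cases hy0 : y = 0
    · subst hy0; simp
    · rw [sg_eq h2 hy hy0]
  · rw [sg_eq h1 hx hx0]
    by_cases hy0 : y = 0
    · subst hy0
      rw [Ps_axis1 h1 (sg_cases _) hp, Ps_axis1 h1 h2 hp]
    · rw [sg_eq h2 hy hy0]

/-- coordinates of `pt` -/
lemma pt_facts {s₁ s₂ ξ ζ : ℝ} (h1 : s₁ = 1 ∨ s₁ = -1) (h2 : s₂ = 1 ∨ s₂ = -1) (hξ : 0 ≤ ξ)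
    (hζ : |ζ| ≤ ξ ^ 2) : |(pt s₁ s₂ ξ ζ).1| + |(pt s₁ s₂ ξ ζ).2| = ξ ∧
      (pt s₁ s₂ ξ ζ).1 ^ 2 - (pt s₁ s₂ ξ ζ).2 ^ 2 = ζ ∧
      0 ≤ s₁ * (pt s₁ s₂ ξ ζ).1 ∧ 0 ≤ s₂ * (pt s₁ s₂ ξ ζ).2 := by
  have hz : |ζ / ξ| ≤ ξ := by
    rcases hξ.eq_or_lt with rfl | hp
    · simp
    · rw [abs_div, abs_of_pos hp, div_le_iff₀ hp]; nlinarith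
  have hb := abs_le.1 hz
  have e1 : s₁ * s₁ = 1 := by rcases h1 with rfl | rfl <;> norm_num
  have e2 : s₂ * s₂ = 1 := by rcases h2 with rfl | rfl <;> norm_num
  have hm : ξ * (ζ / ξ) = ζ := by
    rcases hξ.eq_or_lt with rfl | hp
    · simp at hζ; simp [hζ]
    · field_simp
  unfold pt
  simp only
  refine ⟨?_, ?_, ?_, ?_⟩
  · rw [abs_mul, abs_mul, abs_sign' h1, abs_sign' h2, abs_of_nonneg (by linarith),
      abs_of_nonneg (by linarith)]
    ring
  · linear_combination (ξ + ζ / ξ) ^ 2 / 4 * e1 - (ξ - ζ / ξ) ^ 2 / 4 * e2 + hm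
  · rw [← mul_assoc, e1]; linarith
  · rw [← mul_assoc, e2]; linarith

lemma pt_coord {s₁ s₂ : ℝ} (h1 : s₁ = 1 ∨ s₁ = -1) (h2 : s₂ = 1 ∨ s₂ = -1) {p : ℝ × ℝ}
    (hx : 0 ≤ s₁ * p.1) (hy : 0 ≤ s₂ * p.2) :
    pt s₁ s₂ (|p.1| + |p.2|) (p.1 ^ 2 - p.2 ^ 2) = p := by
  obtain ⟨x, y⟩ := p
  simp only at hx hy ⊢
  have a1 : s₁ * x = |x| := by rw [← abs_of_nonneg hx, abs_mul, abs_sign' h1, one_mul]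
  have a2 : s₂ * y = |y| := by rw [← abs_of_nonneg hy, abs_mul, abs_sign' h2, one_mul]
  have e1 : s₁ * s₁ = 1 := by rcases h1 with rfl | rfl <;> norm_num
  have e2 : s₂ * s₂ = 1 := by rcases h2 with rfl | rfl <;> norm_num
  have hq : (x ^ 2 - y ^ 2) / (|x| + |y|) = |x| - |y| := by
    rw [← sq_abs x, ← sq_abs y]
    by_cases h0 : |x| + |y| = 0
    · rw [h0, div_zero]
      have := abs_nonneg x; have := abs_nonneg y
      linarith
    · field_simp; ring
  unfold pt
  rw [hq, ← a1, ← a2]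
  ext
  · simp only; linear_combination x * e1
  · simp only; linear_combination y * e2

lemma Psq_cont {s₁ s₂ : ℝ} (h1 : s₁ = 1 ∨ s₁ = -1) (h2 : s₂ = 1 ∨ s₂ = -1) :
    ContinuousOn (Psq s₁ s₂) Dm := by
  have hz : ContinuousOn
      (fun p : ℝ × ℝ => Zf s₂ s₁ (p.1 ^ 2 - p.2 ^ 2) (|p.1| + |p.2|)) Dm := by
    refine (Zf_cont (abs_sign h2) (abs_sign h1)).comp
      (f := fun p : ℝ × ℝ => (|p.1| + |p.2|, p.1 ^ 2 - p.2 ^ 2)) (by fun_prop) ?_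
    intro p hp
    exact ⟨xi_mem hp, label_small (xi_mem hp) (label_bd _ _)⟩
  have hx : Continuous (fun p : ℝ × ℝ => |p.1| + |p.2|) := by fun_prop
  have hq : ContinuousOn
      (fun p : ℝ × ℝ => Zf s₂ s₁ (p.1 ^ 2 - p.2 ^ 2) (|p.1| + |p.2|) / (|p.1| + |p.2|)) Dm := by
    intro p hp
    by_cases h0 : |p.1| + |p.2| = 0
    · unfold ContinuousWithinAt
      beta_reduce
      rw [h0, div_zero]
      refine squeeze_zero_norm' (a := fun p : ℝ × ℝ => |p.1| + |p.2|) ?_ ?_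
      · filter_upwards [self_mem_nhdsWithin] with q hq
        have hb := Zf_cone (abs_sign h2) (abs_sign h1) (xi_mem hq) (label_bd q.1 q.2)
        rw [Real.norm_eq_abs, abs_div, abs_of_nonneg (xi_mem hq).1]
        refine div_le_of_le_mul₀ (xi_mem hq).1 (xi_mem hq).1 ?_
        rwa [← sq]
      · have := hx.tendsto p
        rw [h0] at this
        exact this.mono_left nhdsWithin_le_nhds
    · exact (hz p hp).div hx.continuousWithinAt h0
  unfold Psq pt
  have hx' := hx.continuousOn (s := Dm)
  exact ((hx'.add hq).div_const 2 |>.const_mul s₁ |>.prodMk ((hx'.sub hq).div_const 2 |>.const_mul s₂))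

lemma Ps_cont : ContinuousOn Ps Dm := by
  have hD : IsClosed Dm := by
    unfold Dm
    exact isClosed_le (by fun_prop) (by fun_prop)
  have hQ : ∀ s₁ s₂ : ℝ, IsClosed (Dm ∩ {p : ℝ × ℝ | 0 ≤ s₁ * p.1 ∧ 0 ≤ s₂ * p.2}) := by
    intro s₁ s₂
    refine hD.inter ?_
    have c1 : IsClosed {p : ℝ × ℝ | 0 ≤ s₁ * p.1} := isClosed_le (by fun_prop) (by fun_prop)
    have c2 : IsClosed {p : ℝ × ℝ | 0 ≤ s₂ * p.2} := isClosed_le (by fun_prop) (by fun_prop)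
    exact c1.inter c2
  have hC : ∀ s₁ s₂ : ℝ, (s₁ = 1 ∨ s₁ = -1) → (s₂ = 1 ∨ s₂ = -1) →
      ContinuousOn Ps (Dm ∩ {p : ℝ × ℝ | 0 ≤ s₁ * p.1 ∧ 0 ≤ s₂ * p.2}) := by
    intro s₁ s₂ h1 h2
    refine ((Psq_cont h1 h2).mono inter_subset_left).congr ?_
    intro p hp
    exact Ps_eq h1 h2 hp.1 hp.2.1 hp.2.2
  have a := (hC 1 1 (by simp) (by simp)).union_of_isClosed (hC 1 (-1) (by simp) (by simp))
    (hQ _ _) (hQ _ _)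
  have b := (hC (-1) 1 (by simp) (by simp)).union_of_isClosed (hC (-1) (-1) (by simp) (by simp))
    (hQ _ _) (hQ _ _)
  have c := a.union_of_isClosed b ((hQ _ _).union (hQ _ _)) ((hQ _ _).union (hQ _ _))
  refine c.mono ?_
  intro p hp
  simp only [mem_union, mem_inter_iff, hp, true_and, mem_ofPred_eq, one_mul, neg_mul,
    Left.nonneg_neg_iff]
  rcases le_total 0 p.1 with h | h <;> rcases le_total 0 p.2 with h' | h' <;> tauto

lemma Ps_facts {s₁ s₂ : ℝ} (h1 : s₁ = 1 ∨ s₁ = -1) (h2 : s₂ = 1 ∨ s₂ = -1) {p : ℝ × ℝ}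
    (hp : p ∈ Dm) (hx : 0 ≤ s₁ * p.1) (hy : 0 ≤ s₂ * p.2) :
    |(Ps p).1| + |(Ps p).2| = |p.1| + |p.2| ∧
    (Ps p).1 ^ 2 - (Ps p).2 ^ 2 = Zf s₂ s₁ (p.1 ^ 2 - p.2 ^ 2) (|p.1| + |p.2|) ∧
      0 ≤ s₁ * (Ps p).1 ∧ 0 ≤ s₂ * (Ps p).2 := by
  rw [Ps_eq h1 h2 hp hx hy]
  exact pt_facts h1 h2 (xi_mem hp).1 (Zf_cone (abs_sign h2) (abs_sign h1) (xi_mem hp) (label_bd _ _))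

lemma sg_nonneg (x : ℝ) : 0 ≤ sg x * x := by rw [sg_mul]; exact abs_nonneg x

lemma Ps_norm {p : ℝ × ℝ} (hp : p ∈ Dm) : |(Ps p).1| + |(Ps p).2| = |p.1| + |p.2| :=
  (Ps_facts (sg_cases p.1) (sg_cases p.2) hp (sg_nonneg _) (sg_nonneg _)).1

lemma Ps_zero2 {p : ℝ × ℝ} (hp : p ∈ Dm) : (Ps p).2 = 0 ↔ p.2 = 0 := by
  obtain ⟨a, b, -, -⟩ := Ps_facts (sg_cases p.1) (sg_cases p.2) hp (sg_nonneg _) (sg_nonneg _)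
  constructor
  · intro h
    rw [h] at a b
    simp only [abs_zero, add_zero] at a
    have e : Zf (sg p.2) (sg p.1) (p.1 ^ 2 - p.2 ^ 2) (|p.1| + |p.2|) = (|p.1| + |p.2|) ^ 2 := by
      rw [← b, ← a, sq_abs]; ring
    have := Zf_bdry_iff (abs_sign (sg_cases p.2)) (abs_sign (sg_cases p.1)) (xi_mem hp)
      (label_bd _ _) (abs_of_nonneg (sq_nonneg _)) e
    rw [← sq_abs p.1, ← sq_abs p.2] at this
    have h1 := abs_nonneg p.1
    have h2 := abs_nonneg p.2
    have : |p.2| = 0 := by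
      by_contra hne
      have := lt_of_le_of_ne h2 (Ne.symm hne)
      nlinarith [mul_nonneg h1 h2]
    exact abs_eq_zero.1 this
  · intro h
    obtain ⟨x, y⟩ := p
    simp only at h
    subst h
    rw [Ps, Ps_axis1 (sg_cases _) (sg_cases _) hp]

lemma Ps_zero1 {p : ℝ × ℝ} (hp : p ∈ Dm) : (Ps p).1 = 0 ↔ p.1 = 0 := by
  obtain ⟨a, b, -, -⟩ := Ps_facts (sg_cases p.1) (sg_cases p.2) hp (sg_nonneg _) (sg_nonneg _)
  constructor
  · intro h
    rw [h] at a b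
    simp only [abs_zero, zero_add] at a
    have e : Zf (sg p.2) (sg p.1) (p.1 ^ 2 - p.2 ^ 2) (|p.1| + |p.2|) = -(|p.1| + |p.2|) ^ 2 := by
      rw [← b, ← a, sq_abs]; ring
    have := Zf_bdry_iff (abs_sign (sg_cases p.2)) (abs_sign (sg_cases p.1)) (xi_mem hp)
      (label_bd _ _) (by rw [abs_neg]; exact abs_of_nonneg (sq_nonneg _)) e
    rw [← sq_abs p.1, ← sq_abs p.2] at this
    have h1 := abs_nonneg p.1
    have h2 := abs_nonneg p.2
    have : |p.1| = 0 := by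
      by_contra hne
      have := lt_of_le_of_ne h1 (Ne.symm hne)
      nlinarith [mul_nonneg h1 h2]
    exact abs_eq_zero.1 this
  · intro h
    obtain ⟨x, y⟩ := p
    simp only at h
    subst h
    rw [Ps, Ps_axis2 (sg_cases _) (sg_cases _) hp]

lemma Ps_quad1 {s : ℝ} (hs : s = 1 ∨ s = -1) {p : ℝ × ℝ} (hp : p ∈ Dm)
    (h : 0 ≤ s * (Ps p).1) : 0 ≤ s * p.1 := by
  by_contra hlt
  rw [not_le] at hlt
  have hs' : -s = 1 ∨ -s = -1 := by rcases hs with rfl | rfl <;> simp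
  have := (Ps_facts hs' (sg_cases p.2) hp (by linarith) (sg_nonneg _)).2.2.1
  have h0 : s * (Ps p).1 = 0 := by linarith
  rcases mul_eq_zero.1 h0 with h | h
  · rw [h] at hs; norm_num at hs
  · rw [(Ps_zero1 hp).1 h] at hlt; simp at hlt

lemma Ps_quad2 {s : ℝ} (hs : s = 1 ∨ s = -1) {p : ℝ × ℝ} (hp : p ∈ Dm)
    (h : 0 ≤ s * (Ps p).2) : 0 ≤ s * p.2 := by
  by_contra hlt
  rw [not_le] at hlt
  have hs' : -s = 1 ∨ -s = -1 := by rcases hs with rfl | rfl <;> simp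
  have := (Ps_facts (sg_cases p.1) hs' hp (sg_nonneg _) (by linarith)).2.2.2
  have h0 : s * (Ps p).2 = 0 := by linarith
  rcases mul_eq_zero.1 h0 with h | h
  · rw [h] at hs; norm_num at hs
  · rw [(Ps_zero2 hp).1 h] at hlt; simp at hlt

lemma Ps_inj : InjOn Ps Dm := by
  intro p hp q hq he
  have h1 := sg_cases p.1
  have h2 := sg_cases p.2
  have f := Ps_facts h1 h2 hp (sg_nonneg _) (sg_nonneg _)
  have q1 : 0 ≤ sg p.1 * q.1 := Ps_quad1 h1 hq (he ▸ f.2.2.1)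
  have q2 : 0 ≤ sg p.2 * q.2 := Ps_quad2 h2 hq (he ▸ f.2.2.2)
  have g := Ps_facts h1 h2 hq q1 q2
  have hξ : |q.1| + |q.2| = |p.1| + |p.2| := by rw [← f.1, ← g.1, he]
  have hz := f.2.1.symm.trans ((by rw [he]) : _ = (Ps q).1 ^ 2 - (Ps q).2 ^ 2) |>.trans g.2.1
  rw [hξ] at hz
  have := Zf_inj (abs_sign h2) (abs_sign h1) (xi_mem hp) (label_small (xi_mem hp) (label_bd _ _))
    (label_small (xi_mem hq) (label_bd _ _)) hz
  rw [← pt_coord h1 h2 (sg_nonneg p.1) (sg_nonneg p.2), ← pt_coord h1 h2 q1 q2, this, hξ]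

lemma pt_mem {s₁ s₂ : ℝ} (h1 : s₁ = 1 ∨ s₁ = -1) (h2 : s₂ = 1 ∨ s₂ = -1) {ξ h : ℝ}
    (hξ : ξ ∈ Icc (0:ℝ) (1 / 10)) (hh : |h| ≤ ξ ^ 2) : pt s₁ s₂ ξ h ∈ Dm := by
  unfold Dm
  rw [mem_ofPred_eq, (pt_facts h1 h2 hξ.1 hh).1]
  exact hξ.2

lemma Ps_pt {s₁ s₂ : ℝ} (h1 : s₁ = 1 ∨ s₁ = -1) (h2 : s₂ = 1 ∨ s₂ = -1) {ξ h : ℝ}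
    (hξ : ξ ∈ Icc (0:ℝ) (1 / 10)) (hh : |h| ≤ ξ ^ 2) :
    Ps (pt s₁ s₂ ξ h) = pt s₁ s₂ ξ (Zf s₂ s₁ h ξ) := by
  have f := pt_facts h1 h2 hξ.1 hh
  rw [Ps_eq h1 h2 (pt_mem h1 h2 hξ hh) f.2.2.1 f.2.2.2, Psq, f.1, f.2.1]

lemma Ps_surj : SurjOn Ps Dm Dm := by
  intro w hw
  have h1 := sg_cases w.1
  have h2 := sg_cases w.2
  obtain ⟨h, hh, he⟩ := Zf_surj (abs_sign h2) (abs_sign h1) (xi_mem hw) (label_bd w.1 w.2)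
  refine ⟨pt (sg w.1) (sg w.2) (|w.1| + |w.2|) h, pt_mem h1 h2 (xi_mem hw) hh, ?_⟩
  rw [Ps_pt h1 h2 (xi_mem hw) hh, he, pt_coord h1 h2 (sg_nonneg _) (sg_nonneg _)]

lemma Ps_maps : MapsTo Ps Dm Dm := by
  intro p hp
  unfold Dm
  rw [mem_ofPred_eq, Ps_norm hp]
  exact hp

/-- the inverse homeomorphism -/
noncomputable def Ph : ℝ × ℝ → ℝ × ℝ := Function.invFunOn Ps Dm

lemma Ph_left {p : ℝ × ℝ} (hp : p ∈ Dm) : Ph (Ps p) = p := Ps_inj.leftInvOn_invFunOn hp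

lemma Ph_right {p : ℝ × ℝ} (hp : p ∈ Dm) : Ps (Ph p) = p := Ps_surj.rightInvOn_invFunOn hp

lemma Ph_maps {p : ℝ × ℝ} (hp : p ∈ Dm) : Ph p ∈ Dm := Ps_surj.mapsTo_invFunOn hp

lemma Dm_compact : IsCompact Dm := by
  have hD : IsClosed Dm := by
    unfold Dm
    exact isClosed_le (by fun_prop) (by fun_prop)
  refine (isCompact_closedBall (0 : ℝ × ℝ) 1).of_isClosed_subset hD ?_
  intro p hp
  have : |p.1| + |p.2| ≤ 1 / 10 := hp
  have h1 := abs_nonneg p.1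
  have h2 := abs_nonneg p.2
  rw [mem_closedBall_zero_iff, Prod.norm_def, Real.norm_eq_abs, Real.norm_eq_abs]
  exact max_le (by linarith) (by linarith)

lemma Ph_cont : ContinuousOn Ph Dm := by
  rw [continuousOn_iff_isClosed]
  intro t ht
  refine ⟨Ps '' (t ∩ Dm), ?_, ?_⟩
  · exact ((Dm_compact.inter_left ht).image_of_continuousOn
      (Ps_cont.mono inter_subset_right)).isClosed
  · ext p
    constructor
    · rintro ⟨hp, hD⟩
      exact ⟨⟨Ph p, ⟨hp, Ph_maps hD⟩, Ph_right hD⟩, hD⟩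
    · rintro ⟨⟨q, hq, rfl⟩, hD⟩
      refine ⟨?_, hD⟩
      rw [mem_preimage, Ph_left hq.2]
      exact hq.1

/-- the family of vector fields -/
def Xe (ε : ℝ) (z : ℝ × ℝ) : ℝ × ℝ :=
  (z.2 ^ 3 + z.1 ^ 2 * z.2 + ε * z.1 ^ 4, z.1 ^ 3 + z.1 * z.2 ^ 2 + ε * z.2 ^ 4)

/-- speed -/
noncomputable def Sp (σ τ ξ ζ : ℝ) : ℝ := ξ ^ 3 / 16 * Den σ τ ξ (cl (ζ / ξ ^ 2))

lemma cl_ab {a b : ℝ} (ha : 0 ≤ a) (hb : 0 ≤ b) (h : 0 < a + b) :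
    cl ((a ^ 2 - b ^ 2) / (a + b) ^ 2) = (a - b) / (a + b) := by
  have e : (a ^ 2 - b ^ 2) / (a + b) ^ 2 = (a - b) / (a + b) := by
    field_simp; ring
  rw [e, cl_eq]
  rw [abs_div, abs_of_pos h, div_le_one h]
  exact abs_le.2 ⟨by linarith, by linarith⟩

lemma Sp_ab (σ τ : ℝ) {a b : ℝ} (ha : 0 ≤ a) (hb : 0 ≤ b) (h : 0 < a + b) :
    Sp σ τ (a + b) (a ^ 2 - b ^ 2) = (a + b) * (a ^ 2 + b ^ 2) + σ * a ^ 4 + τ * b ^ 4 := by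
  unfold Sp
  rw [cl_ab ha hb h]
  unfold Den
  field_simp
  ring

lemma SpR_ab {σ τ a b : ℝ} (ha : 0 ≤ a) (hb : 0 ≤ b) (h : 0 < a + b)
    (hD : Den σ τ (a + b) ((a - b) / (a + b)) ≠ 0) :
    Sp σ τ (a + b) (a ^ 2 - b ^ 2) * R σ τ (a + b) (a ^ 2 - b ^ 2) =
      2 * (σ * a ^ 5 - τ * b ^ 5) := by
  unfold Sp R
  rw [cl_ab ha hb h]
  have : Num σ τ ((a - b) / (a + b)) = 32 * (σ * a ^ 5 - τ * b ^ 5) / (a + b) ^ 5 := by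
    unfold Num; field_simp; ring
  rw [this]
  field_simp
  ring

lemma Sp_pos {σ τ : ℝ} (hσ : |σ| ≤ 1) (hτ : |τ| ≤ 1) {ξ : ℝ} (ζ : ℝ) (h0 : 0 < ξ)
    (h1 : ξ ≤ 1 / 10) : 0 < Sp σ τ ξ ζ := by
  have := Den_lb hσ hτ h0.le h1 (cl_mem (ζ / ξ ^ 2))
  unfold Sp
  have : 0 < Den σ τ ξ (cl (ζ / ξ ^ 2)) := by linarith
  positivity

lemma Sp_le {σ τ : ℝ} (hσ : |σ| ≤ 1) (hτ : |τ| ≤ 1) {ξ : ℝ} (ζ : ℝ) (h0 : 0 < ξ)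
    (h1 : ξ ≤ 1 / 10) : Sp σ τ ξ ζ ≤ 1 := by
  obtain ⟨l, u⟩ := cl_mem (ζ / ξ ^ 2)
  unfold Sp
  generalize cl (ζ / ξ ^ 2) = θ at *
  have h := comb hσ hτ (pow_bd (u := 1 + θ) (by linarith) (by linarith) 4)
    (pow_bd (u := 1 - θ) (by linarith) (by linarith) 4)
  have h2 := (abs_le.1 h).2
  have h3 : ξ ^ 3 ≤ (1 / 10) ^ 3 := pow_le_pow_left₀ h0.le h1 3
  have hd : Den σ τ ξ θ ≤ 160 := by
    unfold Den
    have : θ ^ 2 ≤ 1 := by nlinarith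
    nlinarith
  have : 0 < ξ ^ 3 := by positivity
  nlinarith

lemma leaf_arc {ε s₁ s₂ : ℝ} (h1 : s₁ = 1 ∨ s₁ = -1) (h2 : s₂ = 1 ∨ s₂ = -1)
    (hσ : |ε * s₂| ≤ 1) (hτ : |ε * s₁| ≤ 1) {Z m : ℝ → ℝ} {J : Set ℝ}
    (hZ : Sol (ε * s₂) (ε * s₁) Z) (hm : ContinuousOn m J)
    (hmJ : ∀ t ∈ J, m t ∈ Ioo (0:ℝ) (1 / 10)) (hmono : StrictMonoOn (fun t => s₁ * s₂ * m t) J)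
    (hcone : ∀ t ∈ J, |Z (m t)| ≤ m t ^ 2) :
    Arc (Xe ε) J (fun t => pt s₁ s₂ (m t) (Z (m t))) := by
  have e1 : s₁ * s₁ = 1 := by rcases h1 with rfl | rfl <;> norm_num
  have e2 : s₂ * s₂ = 1 := by rcases h2 with rfl | rfl <;> norm_num
  set S : ℝ → ℝ := fun ξ => Sp (ε * s₂) (ε * s₁) ξ (Z ξ) with hS
  have hSpos : ∀ ξ ∈ Ioo (0:ℝ) (1 / 10), 0 < S ξ := fun ξ hξ => Sp_pos hσ hτ _ hξ.1 hξ.2.le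
  have hZc : ContinuousOn Z (Ioo 0 (1 / 10)) := fun x hx =>
    ((hZ x ⟨hx.1.le, hx.2.le⟩).continuousWithinAt).mono Ioo_subset_Icc_self
  have hSc : ContinuousOn S (Ioo 0 (1 / 10)) := by
    have : ContinuousOn (fun ξ => cl (Z ξ / ξ ^ 2)) (Ioo 0 (1 / 10)) := by
      refine cl_cont.comp_continuousOn (hZc.div (by fun_prop) ?_)
      intro x hx
      exact (pow_pos hx.1 2).ne'
    simp only [hS, Sp, Den]
    fun_prop
  set q : ℝ → ℝ := fun ξ => 1 / S ξ with hq
  have hqc : ContinuousOn q (Ioo 0 (1 / 10)) := by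
    refine continuousOn_const.div hSc ?_
    intro x hx
    exact (hSpos x hx).ne'
  set T : ℝ → ℝ := fun ξ => ∫ u in (1 / 20 : ℝ)..ξ, q u with hT
  have hTd : ∀ ξ ∈ Ioo (0:ℝ) (1 / 10), HasDerivAt T (q ξ) ξ := by
    intro ξ hξ
    have hsub : uIcc (1 / 20 : ℝ) ξ ⊆ Ioo 0 (1 / 10) :=
      (convex_Ioo (0:ℝ) (1 / 10)).ordConnected.uIcc_subset ⟨by norm_num, by norm_num⟩ hξ
    refine intervalIntegral.integral_hasDerivAt_right (hqc.mono hsub).intervalIntegrable ?_ ?_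
    · exact hqc.stronglyMeasurableAtFilter isOpen_Ioo ξ hξ
    · exact hqc.continuousAt (isOpen_Ioo.mem_nhds hξ)
  have hTm : StrictMonoOn T (Ioo 0 (1 / 10)) := by
    refine strictMonoOn_of_hasDerivWithinAt_pos (convex_Ioo _ _) (f' := q) ?_ ?_ ?_
    · exact fun x hx => (hTd x hx).continuousAt.continuousWithinAt
    · intro x hx
      rw [interior_Ioo] at hx
      exact (hTd x hx).hasDerivWithinAt
    · intro x hx
      rw [interior_Ioo] at hx
      exact one_div_pos.2 (hSpos x hx)
  refine Arc.of_comp (β := fun ξ => pt s₁ s₂ ξ (Z ξ)) (T := fun ξ => s₁ * s₂ * T ξ)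
    (κ := fun ξ => s₁ * s₂ * q ξ) hm ?_ ?_ ?_ ?_
  · intro t ht
    exact (hTd _ (hmJ t ht)).const_mul _
  · intro t ht
    have : q (m t) ≠ 0 := (one_div_pos.2 (hSpos _ (hmJ t ht))).ne'
    rcases h1 with rfl | rfl <;> rcases h2 with rfl | rfl <;> simpa using this
  · intro u hu v hv huv
    have := hmono hu hv huv
    have k := fun h => hTm (hmJ u hu) (hmJ v hv) h
    have k' := fun h => hTm (hmJ v hv) (hmJ u hu) h
    rcases h1 with rfl | rfl <;> rcases h2 with rfl | rfl <;> simp at this ⊢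
    · exact k this
    · exact k' this
    · exact k' this
    · exact k this
  · intro t ht
    have hξ := hmJ t ht
    have hc := hcone t ht
    generalize m t = ξ at *
    have hZd : HasDerivAt Z (R (ε * s₂) (ε * s₁) ξ (Z ξ)) ξ :=
      (hZ ξ ⟨hξ.1.le, hξ.2.le⟩).hasDerivAt (Icc_mem_nhds hξ.1 hξ.2)
    have hne : ξ ≠ 0 := hξ.1.ne'
    have hdiv := hZd.div (hasDerivAt_id' ξ) hne
    have hd1 := (((hasDerivAt_id' ξ).add hdiv).div_const 2).const_mul s₁
    have hd2 := (((hasDerivAt_id' ξ).sub hdiv).div_const 2).const_mul s₂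
    refine (hd1.prodMk hd2).congr_deriv ?_
    obtain ⟨a, ha⟩ : ∃ a, a = (ξ + Z ξ / ξ) / 2 := ⟨_, rfl⟩
    obtain ⟨b, hb⟩ : ∃ b, b = (ξ - Z ξ / ξ) / 2 := ⟨_, rfl⟩
    have hab : ξ = a + b := by rw [ha, hb]; ring
    have hz : |Z ξ / ξ| ≤ ξ := by
      rw [abs_div, abs_of_pos hξ.1, div_le_iff₀ hξ.1]; nlinarith
    have hz' := abs_le.1 hz
    have ha0 : 0 ≤ a := by rw [ha]; linarith
    have hb0 : 0 ≤ b := by rw [hb]; linarith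
    have hzab : Z ξ = a ^ 2 - b ^ 2 := by
      have : Z ξ = ξ * (Z ξ / ξ) := by field_simp
      have e : Z ξ / ξ = a - b := by rw [ha, hb]; ring
      rw [this, e, hab]; ring
    have hpt : pt s₁ s₂ ξ (Z ξ) = (s₁ * a, s₂ * b) := by rw [ha, hb]; rfl
    have hSab : S ξ = (a + b) * (a ^ 2 + b ^ 2) + ε * s₂ * a ^ 4 + ε * s₁ * b ^ 4 := by
      rw [← Sp_ab _ _ ha0 hb0 (hab ▸ hξ.1), hS, hab.symm, ← hzab]
    have hSR : S ξ * R (ε * s₂) (ε * s₁) ξ (Z ξ) = 2 * (ε * s₂ * a ^ 5 - ε * s₁ * b ^ 5) := by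
      have hD := Den_lb hσ hτ hξ.1.le hξ.2.le (cl_mem (Z ξ / ξ ^ 2))
      rw [hzab, hab, cl_ab ha0 hb0 (hab ▸ hξ.1)] at hD
      rw [← SpR_ab ha0 hb0 (hab ▸ hξ.1) (by linarith), hS, hab.symm, ← hzab]
    have hSp := (hSpos ξ hξ).ne'
    simp only [hpt, Xe, hq]
    generalize R (ε * s₂) (ε * s₁) ξ (Z ξ) = ρ at *
    generalize S ξ = σ at *
    rw [hzab]
    have hρ : ρ = 2 * (ε * s₂ * a ^ 5 - ε * s₁ * b ^ 5) / σ := by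
      rw [← hSR]; field_simp
    have key1 : (1 + (ρ * ξ - (a ^ 2 - b ^ 2) * 1) / ξ ^ 2) / 2 * σ =
        b * (a ^ 2 + b ^ 2) + ε * s₂ * a ^ 4 := by
      field_simp
      rw [hSab] at *
      rw [hab] at *
      linear_combination (a + b) * hSR
    have key2 : (1 - (ρ * ξ - (a ^ 2 - b ^ 2) * 1) / ξ ^ 2) / 2 * σ =
        a * (a ^ 2 + b ^ 2) + ε * s₁ * b ^ 4 := by
      field_simp
      rw [hSab] at *
      rw [hab] at *
      linear_combination (-(a + b)) * hSR
    have f1 : (s₁ * a) ^ 2 = a ^ 2 := by rw [mul_pow, sq s₁, e1, one_mul]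
    have f2 : (s₂ * b) ^ 2 = b ^ 2 := by rw [mul_pow, sq s₂, e2, one_mul]
    have f3 : (s₁ * a) ^ 4 = a ^ 4 := by
      rw [show (s₁ * a) ^ 4 = ((s₁ * a) ^ 2) ^ 2 by ring, f1]; ring
    have f4 : (s₂ * b) ^ 4 = b ^ 4 := by
      rw [show (s₂ * b) ^ 4 = ((s₂ * b) ^ 2) ^ 2 by ring, f2]; ring
    have f5 : (s₁ * a) ^ 3 = s₁ * a ^ 3 := by
      rw [show (s₁ * a) ^ 3 = s₁ * a * (s₁ * a) ^ 2 by ring, f1]; ring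
    have f6 : (s₂ * b) ^ 3 = s₂ * b ^ 3 := by
      rw [show (s₂ * b) ^ 3 = s₂ * b * (s₂ * b) ^ 2 by ring, f2]; ring
    rw [f1, f2, f3, f4, f5, f6]
    ext
    · simp only [Prod.smul_mk, smul_eq_mul]
      rw [← eq_div_iff hSp] at key1
      rw [key1]
      field_simp
      linear_combination (-(s₁ * b * (a ^ 2 + b ^ 2))) * e2
    · simp only [Prod.smul_mk, smul_eq_mul]
      rw [← eq_div_iff hSp] at key2
      rw [key2]
      field_simp
      linear_combination (-(s₂ * a * (a ^ 2 + b ^ 2))) * e1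

lemma quad_leaf {ε s₁ s₂ : ℝ} (h1 : s₁ = 1 ∨ s₁ = -1) (h2 : s₂ = 1 ∨ s₂ = -1)
    (hσ : |ε * s₂| ≤ 1) (hτ : |ε * s₁| ≤ 1) {J : Set ℝ} (hJ : J.OrdConnected) {c : ℝ → ℝ × ℝ}
    (hc : ∀ t ∈ J, HasDerivWithinAt c (Xe ε (c t)) J t)
    (hx : ∀ t ∈ J, 0 ≤ s₁ * (c t).1) (hy : ∀ t ∈ J, 0 ≤ s₂ * (c t).2)
    (hpos : ∀ t ∈ J, s₁ * (c t).1 + s₂ * (c t).2 ∈ Ioo (0:ℝ) (1 / 10)) {t₀ : ℝ} (ht₀ : t₀ ∈ J) :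
    ContinuousOn (fun t => s₁ * (c t).1 + s₂ * (c t).2) J ∧
    StrictMonoOn (fun t => s₁ * s₂ * (s₁ * (c t).1 + s₂ * (c t).2)) J ∧
    ∃ h : ℝ, |h| ≤ 1 / 100 ∧ ∀ t ∈ J, |h| ≤ (s₁ * (c t).1 + s₂ * (c t).2) ^ 2 ∧
      c t = pt s₁ s₂ (s₁ * (c t).1 + s₂ * (c t).2)
        (Zf (ε * s₂) (ε * s₁) h (s₁ * (c t).1 + s₂ * (c t).2)) := by
  have e1 : s₁ * s₁ = 1 := by rcases h1 with rfl | rfl <;> norm_num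
  have e2 : s₂ * s₂ = 1 := by rcases h2 with rfl | rfl <;> norm_num
  have hconv : Convex ℝ J := hJ.convex
  set m : ℝ → ℝ := fun t => s₁ * (c t).1 + s₂ * (c t).2 with hm
  set z : ℝ → ℝ := fun t => (c t).1 ^ 2 - (c t).2 ^ 2 with hz
  have hc1 : ∀ t ∈ J, HasDerivWithinAt (fun t => (c t).1) (Xe ε (c t)).1 J t := fun t ht =>
    (ContinuousLinearMap.fst ℝ ℝ ℝ).hasFDerivAt.comp_hasDerivWithinAt t (hc t ht)
  have hc2 : ∀ t ∈ J, HasDerivWithinAt (fun t => (c t).2) (Xe ε (c t)).2 J t := fun t ht =>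
    (ContinuousLinearMap.snd ℝ ℝ ℝ).hasFDerivAt.comp_hasDerivWithinAt t (hc t ht)
  have hzab : ∀ t, z t = (s₁ * (c t).1) ^ 2 - (s₂ * (c t).2) ^ 2 := by
    intro t
    simp only [hz]
    linear_combination (-(c t).1 ^ 2) * e1 + (c t).2 ^ 2 * e2
  have hmd : ∀ t ∈ J, HasDerivWithinAt m
      (s₁ * s₂ * Sp (ε * s₂) (ε * s₁) (m t) (z t)) J t := by
    intro t ht
    refine (((hc1 t ht).const_mul s₁).add ((hc2 t ht).const_mul s₂)).congr_deriv ?_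
    rw [hzab, hm, Sp_ab _ _ (hx t ht) (hy t ht) (hpos t ht).1]
    rcases h1 with rfl | rfl <;> rcases h2 with rfl | rfl <;> simp only [Xe] <;> ring
  have hzd : ∀ t ∈ J, HasDerivWithinAt z
      (s₁ * s₂ * Sp (ε * s₂) (ε * s₁) (m t) (z t) * R (ε * s₂) (ε * s₁) (m t) (z t)) J t := by
    intro t ht
    refine (((hc1 t ht).pow 2).sub ((hc2 t ht).pow 2)).congr_deriv ?_
    have hD := Den_lb hσ hτ (hpos t ht).1.le (hpos t ht).2.le (cl_mem (z t / m t ^ 2))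
    rw [hzab, hm] at hD
    simp only at hD
    rw [cl_ab (hx t ht) (hy t ht) (hpos t ht).1] at hD
    have hD' : Den (ε * s₂) (ε * s₁) (s₁ * (c t).1 + s₂ * (c t).2)
        ((s₁ * (c t).1 - s₂ * (c t).2) / (s₁ * (c t).1 + s₂ * (c t).2)) ≠ 0 :=
      (lt_of_lt_of_le (by norm_num) hD).ne'
    rw [mul_assoc (s₁ * s₂), hzab, hm, SpR_ab (hx t ht) (hy t ht) (hpos t ht).1 hD']
    rcases h1 with rfl | rfl <;> rcases h2 with rfl | rfl <;> simp only [Xe] <;> norm_num <;> ring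
  have hmI : ∀ t ∈ J, m t ∈ Icc (0:ℝ) (1 / 10) := fun t ht =>
    ⟨(hpos t ht).1.le, (hpos t ht).2.le⟩
  have hSp : ∀ t ∈ J, 0 < Sp (ε * s₂) (ε * s₁) (m t) (z t) := fun t ht =>
    Sp_pos hσ hτ _ (hpos t ht).1 (hpos t ht).2.le
  have hzb : ∀ t ∈ J, |z t| ≤ m t ^ 2 := by
    intro t ht
    rw [hzab]
    have := label_bd (s₁ * (c t).1) (s₂ * (c t).2)
    rwa [abs_of_nonneg (hx t ht), abs_of_nonneg (hy t ht)] at this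
  refine ⟨fun t ht => (hmd t ht).continuousWithinAt, ?_, ?_⟩
  · refine strictMonoOn_of_hasDerivWithinAt_pos hconv
      (f' := fun t => Sp (ε * s₂) (ε * s₁) (m t) (z t)) ?_ ?_ ?_
    · exact fun t ht => ((hmd t ht).const_mul (s₁ * s₂)).continuousWithinAt
    · intro t ht
      refine (((hmd t (interior_subset ht)).const_mul (s₁ * s₂)).congr_deriv ?_).mono interior_subset
      rw [← mul_assoc, show s₁ * s₂ * (s₁ * s₂) = (s₁ * s₁) * (s₂ * s₂) by ring, e1, e2]; ring
    · exact fun t ht => hSp t (interior_subset ht)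
  · obtain ⟨h, hh, he⟩ := Zf_surj hσ hτ (hmI t₀ ht₀) (hzb t₀ ht₀)
    have hs : |h| ≤ 1 / 100 := label_small (hmI t₀ ht₀) hh
    have hZ := (Zf_spec hσ hτ hs).2
    have hZd : ∀ t ∈ J, HasDerivWithinAt (fun t => Zf (ε * s₂) (ε * s₁) h (m t))
        (R (ε * s₂) (ε * s₁) (m t) (Zf (ε * s₂) (ε * s₁) h (m t)) *
          (s₁ * s₂ * Sp (ε * s₂) (ε * s₁) (m t) (z t))) J t := by
      intro t ht
      exact ((hZ (m t) (hmI t ht)).hasDerivAt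
        (Icc_mem_nhds (hpos t ht).1 (hpos t ht).2)).comp_hasDerivWithinAt t (hmd t ht)
    have hD : ∀ t ∈ J, z t = Zf (ε * s₂) (ε * s₁) h (m t) := by
      intro t ht
      have := gron hconv (D := fun t => z t - Zf (ε * s₂) (ε * s₁) h (m t)) (K := 100)
        (fun t ht => (hzd t ht).sub (hZd t ht)) (fun t ht => by
          have r := R_lip hσ hτ (z t) (Zf (ε * s₂) (ε * s₁) h (m t)) (hmI t ht).1 (hmI t ht).2
          have sp := Sp_le hσ hτ (z t) (hpos t ht).1 (hpos t ht).2.le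
          have sp0 := hSp t ht
          rw [mul_comm (R _ _ _ (Zf _ _ _ _)), ← mul_sub, abs_mul, abs_mul, abs_mul,
            abs_sign' h1, abs_sign' h2, abs_of_pos sp0, one_mul, one_mul]
          calc _ ≤ 1 * |R (ε * s₂) (ε * s₁) (m t) (z t) -
              R (ε * s₂) (ε * s₁) (m t) (Zf (ε * s₂) (ε * s₁) h (m t))| :=
                mul_le_mul_of_nonneg_right sp (abs_nonneg _)
            _ ≤ _ := by rw [one_mul]; exact r) ht₀ ht
      simp only [he, sub_self, abs_zero, mul_zero] at this
      exact sub_eq_zero.1 (abs_nonpos_iff.1 this)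
    refine ⟨h, hs, fun t ht => ⟨label_le hσ hτ (hmI t ht) hs ?_, ?_⟩⟩
    · have := hzb t ht
      rwa [hD t ht] at this
    · have := pt_coord h1 h2 (hx t ht) (hy t ht)
      have hmm : |(c t).1| + |(c t).2| = m t := by
        have a1 : |s₁ * (c t).1| = |(c t).1| := by rw [abs_mul, abs_sign' h1, one_mul]
        have a2 : |s₂ * (c t).2| = |(c t).2| := by rw [abs_mul, abs_sign' h2, one_mul]
        rw [← a1, ← a2, abs_of_nonneg (hx t ht), abs_of_nonneg (hy t ht)]
      rw [hmm] at this
      rw [← hD t ht]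
      exact this.symm

/-- The map between the phase portraits of two members of the family -/
lemma quad_arc {ε ε' s₁ s₂ : ℝ} (h1 : s₁ = 1 ∨ s₁ = -1) (h2 : s₂ = 1 ∨ s₂ = -1)
    (hε : |ε| ≤ 1) (hε' : |ε'| ≤ 1) {J : Set ℝ} (hJ : J.OrdConnected) {c : ℝ → ℝ × ℝ}
    (hc : ∀ t ∈ J, HasDerivWithinAt c (Xe ε (c t)) J t)
    (hx : ∀ t ∈ J, 0 ≤ s₁ * (c t).1) (hy : ∀ t ∈ J, 0 < s₂ * (c t).2)
    (hpos : ∀ t ∈ J, |(c t).1| + |(c t).2| < 1 / 10) {t₀ : ℝ} (ht₀ : t₀ ∈ J) {F : ℝ × ℝ → ℝ × ℝ}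
    (hF : ∀ h ξ, ξ ∈ Icc (0:ℝ) (1 / 10) → |h| ≤ ξ ^ 2 →
      F (pt s₁ s₂ ξ (Zf (ε * s₂) (ε * s₁) h ξ)) = pt s₁ s₂ ξ (Zf (ε' * s₂) (ε' * s₁) h ξ)) :
    Arc (Xe ε') J (fun t => F (c t)) := by
  have b : ∀ {e s : ℝ}, |e| ≤ 1 → (s = 1 ∨ s = -1) → |e * s| ≤ 1 := by
    intro e s he hs
    rwa [abs_mul, abs_sign' hs, mul_one]
  have hm : ∀ t ∈ J, s₁ * (c t).1 + s₂ * (c t).2 ∈ Ioo (0:ℝ) (1 / 10) := by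
    intro t ht
    have a1 : |s₁ * (c t).1| = |(c t).1| := by rw [abs_mul, abs_sign' h1, one_mul]
    have a2 : |s₂ * (c t).2| = |(c t).2| := by rw [abs_mul, abs_sign' h2, one_mul]
    have := hpos t ht
    rw [← a1, ← a2, abs_of_nonneg (hx t ht), abs_of_pos (hy t ht)] at this
    exact ⟨add_pos_of_nonneg_of_pos (hx t ht) (hy t ht), this⟩
  have hmI : ∀ t ∈ J, s₁ * (c t).1 + s₂ * (c t).2 ∈ Icc (0:ℝ) (1 / 10) := fun t ht =>
    ⟨(hm t ht).1.le, (hm t ht).2.le⟩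
  obtain ⟨k1, k2, h, hs, k3⟩ := quad_leaf h1 h2 (b hε h2) (b hε h1) hJ hc hx
    (fun t ht => (hy t ht).le) hm ht₀
  have hZ := (Zf_spec (b hε' h2) (b hε' h1) hs).2
  refine (leaf_arc h1 h2 (b hε' h2) (b hε' h1) hZ k1 hm k2 ?_).congr ?_
  · intro t ht
    exact Zf_cone (b hε' h2) (b hε' h1) (hmI t ht) (k3 t ht).1
  · intro t ht
    rw [← hF h _ (hmI t ht) (k3 t ht).1, ← (k3 t ht).2]

lemma half_arc {ε ε' : ℝ} (hε : ε = 0 ∨ ε = 1) (hε' : |ε'| ≤ 1) {s₂ : ℝ}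
    (h2 : s₂ = 1 ∨ s₂ = -1) {J : Set ℝ} (hJ : J.OrdConnected)
    {c : ℝ → ℝ × ℝ} (hc : ∀ t ∈ J, HasDerivWithinAt c (Xe ε (c t)) J t)
    (hy : ∀ t ∈ J, 0 < s₂ * (c t).2)
    (hpos : ∀ t ∈ J, |(c t).1| + |(c t).2| < 1 / 10) {F : ℝ × ℝ → ℝ × ℝ}
    (hF : ∀ s₁ : ℝ, (s₁ = 1 ∨ s₁ = -1) → ∀ h ξ, ξ ∈ Icc (0:ℝ) (1 / 10) → |h| ≤ ξ ^ 2 →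
      F (pt s₁ s₂ ξ (Zf (ε * s₂) (ε * s₁) h ξ)) = pt s₁ s₂ ξ (Zf (ε' * s₂) (ε' * s₁) h ξ))
    {t₁ : ℝ} (ht₁ : t₁ ∈ J) :
    Arc (Xe ε') J (fun t => F (c t)) := by
  have hεa : |ε| ≤ 1 := by rcases hε with rfl | rfl <;> simp
  have hc1 : ∀ t ∈ J, HasDerivWithinAt (fun t => (c t).1) (Xe ε (c t)).1 J t := fun t ht =>
    (ContinuousLinearMap.fst ℝ ℝ ℝ).hasFDerivAt.comp_hasDerivWithinAt t (hc t ht)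
  have hc2 : ∀ t ∈ J, HasDerivWithinAt (fun t => (c t).2) (Xe ε (c t)).2 J t := fun t ht =>
    (ContinuousLinearMap.snd ℝ ℝ ℝ).hasFDerivAt.comp_hasDerivWithinAt t (hc t ht)
  have hcx : ContinuousOn (fun t => (c t).1) J := fun t ht => (hc1 t ht).continuousWithinAt
  have hcy : ContinuousOn (fun t => (c t).2) J := fun t ht => (hc2 t ht).continuousWithinAt
  -- the function `x (1 - ε y)` is strictly monotone
  have hgm : StrictMonoOn (fun t => s₂ * ((c t).1 * (1 - ε * (c t).2))) J := by
    refine strictMonoOn_of_hasDerivWithinAt_pos hJ.convex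
      (f' := fun t => s₂ * ((Xe ε (c t)).1 * (1 - ε * (c t).2) + (c t).1 * (-(ε * (Xe ε (c t)).2))))
      (by fun_prop) ?_ ?_
    · intro t ht
      have ht' := interior_subset ht
      exact (((hc1 t ht').mul (((hc2 t ht').const_mul ε).const_sub 1)).const_mul s₂).mono
        interior_subset
    · intro t ht
      have ht' := interior_subset ht
      have a := hpos t ht'
      have b := hy t ht'
      simp only [Xe]
      generalize (c t).1 = x at *
      generalize (c t).2 = y at *
      have hx' := abs_le.1 (show |x| ≤ 1 / 10 by linarith [abs_nonneg y])
      have hy' := abs_le.1 (show |y| ≤ 1 / 10 by linarith [abs_nonneg x])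
      have e : s₂ * ((y ^ 3 + x ^ 2 * y + ε * x ^ 4) * (1 - ε * y) +
          x * (-(ε * (x ^ 3 + x * y ^ 2 + ε * y ^ 4)))) =
        (s₂ * y) * ((x ^ 2 + y ^ 2) * (1 - ε * y) - ε ^ 2 * x ^ 4 - ε * x ^ 2 * y
          - ε ^ 2 * x * y ^ 3) := by ring
      rw [e]
      refine mul_pos b ?_
      have hy0 : 0 < y ^ 2 := by
        have : y ≠ 0 := by rintro rfl; simp at b
        positivity
      have q1 : x ^ 2 * y ≤ x ^ 2 * (1 / 10) := mul_le_mul_of_nonneg_left hy'.2 (sq_nonneg x)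
      have q2 : x ^ 2 * x ^ 2 ≤ x ^ 2 * (1 / 100) :=
        mul_le_mul_of_nonneg_left (by nlinarith) (sq_nonneg x)
      have q3 : y ^ 2 * (x * y) ≤ y ^ 2 * (1 / 100) := by
        refine mul_le_mul_of_nonneg_left ?_ (sq_nonneg y)
        nlinarith
      have q4 : y ^ 2 * y ≤ y ^ 2 * (1 / 10) := mul_le_mul_of_nonneg_left hy'.2 (sq_nonneg y)
      rcases hε with rfl | rfl
      · nlinarith [sq_nonneg x]
      · nlinarith [sq_nonneg x]
  have hfac : ∀ t ∈ J, 0 < 1 - ε * (c t).2 := by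
    intro t ht
    have a := hpos t ht
    have hy' := abs_le.1 (show |(c t).2| ≤ 1 / 10 by linarith [abs_nonneg (c t).1])
    rcases hε with rfl | rfl <;> linarith
  have key : ∀ t₀ ∈ J, (c t₀).1 = 0 → ∀ t ∈ J, (t ≤ t₀ → 0 ≤ (-s₂) * (c t).1) ∧
      (t₀ ≤ t → 0 ≤ s₂ * (c t).1) := by
    intro t₀ ht₀ h0 t ht
    have hf := hfac t ht
    constructor
    · intro hle
      have := hgm.monotoneOn ht ht₀ hle
      simp only [h0, zero_mul, mul_zero, ← mul_assoc] at this
      by_contra hneg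
      have := mul_pos (show 0 < s₂ * (c t).1 by linarith) hf
      linarith
    · intro hle
      have := hgm.monotoneOn ht₀ ht hle
      simp only [h0, zero_mul, mul_zero, ← mul_assoc] at this
      by_contra hneg
      have := mul_neg_of_neg_of_pos (show s₂ * (c t).1 < 0 by linarith) hf
      linarith
  have hm2 : -s₂ = 1 ∨ -s₂ = -1 := by rcases h2 with rfl | rfl <;> simp
  by_cases hz : ∃ t₀ ∈ J, (c t₀).1 = 0
  · obtain ⟨t₀, ht₀, h0⟩ := hz
    refine Arc.glue ht₀ ?_ ?_
    · exact quad_arc hm2 h2 hεa hε' (hJ.inter ordConnected_Iic)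
        (fun t ht => (hc t ht.1).mono inter_subset_left)
        (fun t ht => (key t₀ ht₀ h0 t ht.1).1 ht.2) (fun t ht => hy t ht.1)
        (fun t ht => hpos t ht.1) (t₀ := t₀) ⟨ht₀, le_refl t₀⟩ (hF _ hm2)
    · exact quad_arc h2 h2 hεa hε' (hJ.inter ordConnected_Ici)
        (fun t ht => (hc t ht.1).mono inter_subset_left)
        (fun t ht => (key t₀ ht₀ h0 t ht.1).2 ht.2) (fun t ht => hy t ht.1)
        (fun t ht => hpos t ht.1) (t₀ := t₀) ⟨ht₀, le_refl t₀⟩ (hF _ h2)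
  · push Not at hz
    have hs : (∀ t ∈ J, 0 < (c t).1) ∨ (∀ t ∈ J, (c t).1 < 0) := by
      by_contra hno
      push Not at hno
      obtain ⟨⟨u, hu, hu'⟩, ⟨v, hv, hv'⟩⟩ := hno
      obtain ⟨w, hw, hw'⟩ := hJ.isPreconnected.intermediate_value hu hv hcx ⟨hu', hv'⟩
      exact hz w hw hw'
    rcases hs with hs | hs
    · exact quad_arc (Or.inl rfl) h2 hεa hε' hJ hc (fun t ht => by linarith [hs t ht]) hy hpos ht₁
        (hF _ (Or.inl rfl))
    · exact quad_arc (Or.inr rfl) h2 hεa hε' hJ hc (fun t ht => by linarith [hs t ht]) hy hpos ht₁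
        (hF _ (Or.inr rfl))

/-- open diamond -/
def Do : Set (ℝ × ℝ) := {p | |p.1| + |p.2| < 1 / 10}

lemma transfer {ε ε' : ℝ} (hε : ε = 0 ∨ ε = 1) (hε' : |ε'| ≤ 1) {F : ℝ × ℝ → ℝ × ℝ}
    (hF : ∀ s₁ s₂ : ℝ, (s₁ = 1 ∨ s₁ = -1) → (s₂ = 1 ∨ s₂ = -1) →
      ∀ h ξ, ξ ∈ Icc (0:ℝ) (1 / 10) → |h| ≤ ξ ^ 2 →
      F (pt s₁ s₂ ξ (Zf (ε * s₂) (ε * s₁) h ξ)) = pt s₁ s₂ ξ (Zf (ε' * s₂) (ε' * s₁) h ξ))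
    (hV : MapsTo F (Do \ {z | z.2 = 0}) (Do \ {z | z.2 = 0}))
    {J : Set ℝ} {c : ℝ → ℝ × ℝ} (hcurve : IsPhaseCurve (Xe ε) (Do \ {z | z.2 = 0}) J c) :
    ∃ (J' : Set ℝ) (d : ℝ → ℝ × ℝ) (τ : ℝ → ℝ),
        IsPhaseCurve (Xe ε') (Do \ {z | z.2 = 0}) J' d ∧
        ContinuousOn τ J ∧ StrictMonoOn τ J ∧ τ '' J = J' ∧
        ∀ t ∈ J, F (c t) = d (τ t) := by
  obtain ⟨hJ, hJn, hJV, hc⟩ := hcurve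
  obtain ⟨t₁, ht₁⟩ := hJn.nonempty
  have hc2 : ∀ t ∈ J, HasDerivWithinAt (fun t => (c t).2) (Xe ε (c t)).2 J t := fun t ht =>
    (ContinuousLinearMap.snd ℝ ℝ ℝ).hasFDerivAt.comp_hasDerivWithinAt t (hc t ht)
  have hcy : ContinuousOn (fun t => (c t).2) J := fun t ht => (hc2 t ht).continuousWithinAt
  have hs : (∀ t ∈ J, 0 < (c t).2) ∨ (∀ t ∈ J, (c t).2 < 0) := by
    by_contra hno
    push Not at hno
    obtain ⟨⟨u, hu, hu'⟩, ⟨v, hv, hv'⟩⟩ := hno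
    obtain ⟨w, hw, hw'⟩ := hJ.isPreconnected.intermediate_value hu hv hcy ⟨hu', hv'⟩
    exact (hJV w hw).2 hw'
  have harc : Arc (Xe ε') J (fun t => F (c t)) := by
    rcases hs with hs | hs
    · exact half_arc hε hε' (Or.inl rfl) hJ hc (fun t ht => by linarith [hs t ht])
        (fun t ht => (hJV t ht).1) (fun s₁ h1 => hF s₁ 1 h1 (Or.inl rfl)) ht₁
    · exact half_arc hε hε' (Or.inr rfl) hJ hc (fun t ht => by linarith [hs t ht])
        (fun t ht => (hJV t ht).1) (fun s₁ h1 => hF s₁ (-1) h1 (Or.inr rfl)) ht₁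
  exact harc.phase hJ hJn (fun t ht => hV (hJV t ht))

lemma Do_sub : Do ⊆ Dm := fun p hp => (show |p.1| + |p.2| < 1 / 10 from hp).le

lemma Ps_Do {p : ℝ × ℝ} (hp : p ∈ Do) : Ps p ∈ Do := by
  show |(Ps p).1| + |(Ps p).2| < 1 / 10
  rw [Ps_norm (Do_sub hp)]
  exact hp

lemma Ph_Do {p : ℝ × ℝ} (hp : p ∈ Do) : Ph p ∈ Do := by
  show |(Ph p).1| + |(Ph p).2| < 1 / 10
  rw [← Ps_norm (Ph_maps (Do_sub hp)), Ph_right (Do_sub hp)]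
  exact hp

lemma Ph_zero2 {p : ℝ × ℝ} (hp : p ∈ Dm) : (Ph p).2 = 0 ↔ p.2 = 0 := by
  rw [← Ps_zero2 (Ph_maps hp), Ph_right hp]

lemma main : OrbitallyEquivAt (Xe 1) (fun z => z.2) (0, 0) (Xe 0) (fun z => z.2) (0, 0) := by
  have hDo : IsOpen Do := by
    unfold Do
    exact isOpen_lt (by fun_prop) (by fun_prop)
  have h00 : ((0, 0) : ℝ × ℝ) ∈ Do := by
    show |(0:ℝ)| + |(0:ℝ)| < 1 / 10
    norm_num
  have hz : ∀ s₁ s₂ h ξ : ℝ, ξ ∈ Icc (0:ℝ) (1 / 10) → |h| ≤ ξ ^ 2 →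
      Zf (0 * s₂) (0 * s₁) h ξ = h := by
    intro s₁ s₂ h ξ hξ hh
    rw [zero_mul, zero_mul, Zf_zero hξ (label_small hξ hh)]
  refine ⟨Do, Do, Ph, Ps, hDo, hDo, h00, h00, Ph_cont.mono Do_sub, Ps_cont.mono Do_sub,
    fun p hp => Ph_Do hp, fun p hp => Ps_Do hp, fun p hp => Ph_right (Do_sub hp),
    fun p hp => Ph_left (Do_sub hp), ?_, ?_, ?_, ?_⟩
  · have h := Ph_left (Do_sub h00)
    have : Ps (0, 0) = (0, 0) := by
      rw [Ps, Ps_axis1 (sg_cases _) (sg_cases _) (Do_sub h00)]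
      simp
    rwa [this] at h
  · ext p
    constructor
    · rintro ⟨q, ⟨hq, hqD⟩, rfl⟩
      exact ⟨(Ph_zero2 (Do_sub hqD)).2 hq, Ph_Do hqD⟩
    · rintro ⟨hp, hpD⟩
      exact ⟨Ps p, ⟨(Ps_zero2 (Do_sub hpD)).2 hp, Ps_Do hpD⟩, Ph_left (Do_sub hpD)⟩
  · intro J c hc
    refine transfer (F := Ph) (Or.inr rfl) (by simp) ?_ ?_ hc
    · intro s₁ s₂ h1 h2 h ξ hξ hh
      rw [hz s₁ s₂ h ξ hξ hh, one_mul, one_mul, ← Ps_pt h1 h2 hξ hh, Ph_left (pt_mem h1 h2 hξ hh)]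
    · intro p hp
      exact ⟨Ph_Do hp.1, fun h => hp.2 ((Ph_zero2 (Do_sub hp.1)).1 h)⟩
  · intro J c hc
    refine transfer (F := Ps) (Or.inl rfl) (by simp) ?_ ?_ hc
    · intro s₁ s₂ h1 h2 h ξ hξ hh
      rw [hz s₁ s₂ h ξ hξ hh, one_mul, one_mul, ← Ps_pt h1 h2 hξ hh]
    · intro p hp
      exact ⟨Ps_Do hp.1, fun h => hp.2 ((Ps_zero2 (Do_sub hp.1)).1 h)⟩


end PPE

/-- (Topological determination by the Newton polygon: example.)
For the impasse function `δ(x,y) = y`, the constrained system with adjoint vector field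
`X(x,y) = (y³ + x²y + x⁴, x³ + xy² + y⁴)` is orientation-preserving `C⁰`-orbitally
equivalent at the origin to the system given by its Newton-polygon principal part
`X_Ω(x,y) = (y³ + x²y, x³ + xy²)`: the terms `x⁴` and `y⁴`, lying strictly above the
boundary of the Newton polygon, do not change the topological type of the phase portrait. -/
theorem principal_part_example :
    OrbitallyEquivAt
      (fun z : ℝ × ℝ => (z.2 ^ 3 + z.1 ^ 2 * z.2 + z.1 ^ 4, z.1 ^ 3 + z.1 * z.2 ^ 2 + z.2 ^ 4))
      (fun z => z.2) (0, 0)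
      (fun z : ℝ × ℝ => (z.2 ^ 3 + z.1 ^ 2 * z.2, z.1 ^ 3 + z.1 * z.2 ^ 2))
      (fun z => z.2) (0, 0) := by
  simpa only [PPE.Xe, one_mul, zero_mul, add_zero] using (show OrbitallyEquivAt (fun z => PPE.Xe 1 z) _ _ (fun z => PPE.Xe 0 z) _ _ from PPE.main)
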